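/- arXiv:2307.16079 — 6 statements merged into one kernel-verified Lean document; each statement's English description precedes it below -/
import Mathlib

section
/- Let μ ∈ ℝ. If f : ℝ → ℂ is differentiable, L-periodic, not identically zero, and satisfies −i f′(s) + V(s) f(s) = μ f(s) for all s ∈ ℝ, then there exists m ∈ ℤ such that μ = μ_m(V,L) = (2π/L)(m + Φ_V), and f(s) = f(0) · exp( i μ s − i ∫_0^s V(ς) dς ) for all s. Conversely, for every m ∈ ℤ the function f_{m,V} is L-periodic, differentiable, and satisfies −i f_{m,V}′ + V f_{m,V} = μ_m(V,L) f_{m,V}. -/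
open MeasureTheory

/-- The mean flux `Φ_V = (1/(2π)) ∫_0^L V`. -/
noncomputable def fluxV (L : ℝ) (V : ℝ → ℝ) : ℝ :=
  (1 / (2 * Real.pi)) * ∫ ς in (0:ℝ)..L, V ς

/-- The eigenvalues `μ_m(V,L) = (2π/L)(m + Φ_V)`. -/
noncomputable def muV (L : ℝ) (V : ℝ → ℝ) (m : ℤ) : ℝ :=
  (2 * Real.pi / L) * ((m : ℝ) + fluxV L V)

/-- The eigenfunctions `f_{m,V}(s) = L^{-1/2} exp(i μ_m(V,L) s - i ∫_0^s V)`. -/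
noncomputable def fmV (L : ℝ) (V : ℝ → ℝ) (m : ℤ) (s : ℝ) : ℂ :=
  ((Real.sqrt L)⁻¹ : ℂ) *
    Complex.exp (Complex.I * ((muV L V m * s - ∫ ς in (0:ℝ)..s, V ς : ℝ) : ℂ))

/-!
Multiplying by `i` turns the eigenvalue equation into the linear equation `f' = i (μ - V) f`, whose
solutions are the multiples of `exp (i θ)` with `θ s = μ s - ∫_0^s V`. As `V` is `L`-periodic,
`θ (s + L) = θ s + θ L`, so a nonzero solution is `L`-periodic exactly when `θ L ∈ 2πℤ`; solving
this for `μ` gives the eigenvalues.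
-/

open Complex

section LinearODE

variable {E : Type*} [NormedAddCommGroup E] [NormedSpace ℂ E] {A a : ℝ → ℂ} {f : ℝ → E}

theorem forall_hasDerivAt_smul_iff_eq_exp_smul (hA : ∀ s, HasDerivAt A (a s) s) (t : ℝ) :
    (∀ s, HasDerivAt f (a s • f s) s) ↔ ∀ s, f s = exp (A s - A t) • f t := by
  constructor
  · intro hf s
    have quotient_deriv : ∀ r, HasDerivAt (fun r => exp (-A r) • f r) 0 r := fun r => by
      refine ((hA r).fun_neg.cexp.smul (hf r)).congr_deriv ?_
      module
    have quotient_const : exp (-A s) • f s = exp (-A t) • f t :=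
      is_const_of_deriv_eq_zero (fun r => (quotient_deriv r).differentiableAt)
        (fun r => (quotient_deriv r).deriv) s t
    calc f s = exp (A s) • exp (-A s) • f s := by rw [smul_smul, ← exp_add]; simp
      _ = exp (A s - A t) • f t := by rw [quotient_const, smul_smul, ← exp_add, sub_eq_add_neg]
  · intro hf s
    have exp_deriv : HasDerivAt (fun r => exp (A r - A t) • f t)
        ((exp (A s - A t) * a s) • f t) s :=
      ((hA s).sub_const (A t)).cexp.smul_const (f t)
    rw [← funext hf] at exp_deriv
    refine exp_deriv.congr_deriv ?_
    rw [hf s, smul_smul, mul_comm]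

end LinearODE

/-- The phase `μ s - ∫_0^s V` of the solutions of `-i f' + V f = μ f`, normalized to vanish at
`s = 0`. -/
noncomputable def gaugePhase (V : ℝ → ℝ) (μ s : ℝ) : ℝ :=
  μ * s - ∫ ς in (0 : ℝ)..s, V ς

section GaugePhase

variable {L μ : ℝ} {V : ℝ → ℝ}

theorem gaugePhase_zero : gaugePhase V μ 0 = 0 := by
  simp [gaugePhase]

theorem hasDerivAt_gaugePhase (hV : Continuous V) (s : ℝ) :
    HasDerivAt (gaugePhase V μ) (μ - V s) s :=
  (hasDerivAt_const_mul μ).sub (hV.integral_hasStrictDerivAt 0 s).hasDerivAt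

theorem gaugePhase_add_period (hV : ∀ a b, IntervalIntegrable V volume a b)
    (hper : Function.Periodic V L) (s : ℝ) :
    gaugePhase V μ (s + L) = gaugePhase V μ s + gaugePhase V μ L := by
  simp only [gaugePhase, hper.intervalIntegral_add_eq_add 0 s hV, zero_add]
  ring

theorem gaugePhase_period_eq_iff_eq_muV (hL : L ≠ 0) (m : ℤ) :
    gaugePhase V μ L = m * (2 * Real.pi) ↔ μ = muV L V m := by
  unfold gaugePhase muV fluxV
  field_simp
  rw [sub_eq_iff_eq_add]

theorem exp_I_mul_gaugePhase_period_eq_one_iff (hL : L ≠ 0) :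
    exp (I * gaugePhase V μ L) = 1 ↔ ∃ m : ℤ, μ = muV L V m := by
  simp only [← gaugePhase_period_eq_iff_eq_muV hL, ← Circle.exp_eq_one, Circle.ext_iff,
    Circle.coe_exp, Circle.coe_one, mul_comm I]

theorem periodic_const_mul_exp_gaugePhase_iff (hL : L ≠ 0)
    (hV : ∀ a b, IntervalIntegrable V volume a b) (hper : Function.Periodic V L)
    {c : ℂ} (hc : c ≠ 0) :
    Function.Periodic (fun s : ℝ => c * exp (I * gaugePhase V μ s)) L ↔
      ∃ m : ℤ, μ = muV L V m := by
  have exp_add_period (s : ℝ) : exp (I * gaugePhase V μ (s + L)) =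
      exp (I * gaugePhase V μ s) * exp (I * gaugePhase V μ L) := by
    rw [gaugePhase_add_period hV hper, ofReal_add, mul_add, exp_add]
  simp only [Function.Periodic, exp_add_period, mul_right_inj' hc, mul_eq_left₀ (exp_ne_zero _),
    forall_const, exp_I_mul_gaugePhase_period_eq_one_iff hL]

end GaugePhase

section Eigenfunction

variable {μ : ℝ} {V : ℝ → ℝ} {f : ℝ → ℂ}

theorem neg_I_mul_add_mul_eq_iff {d v z w : ℂ} :
    -I * d + v * w = z * w ↔ d = I * (z - v) * w := by
  constructor <;> intro h
  · linear_combination I * h + d * I_mul_I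
  · linear_combination -I * h - (z - v) * w * I_mul_I

theorem eigenfunction_iff_hasDerivAt :
    (Differentiable ℝ f ∧ ∀ s, -I * deriv f s + V s * f s = μ * f s) ↔
      ∀ s, HasDerivAt f (I * (μ - V s) * f s) s := by
  simp only [neg_I_mul_add_mul_eq_iff]
  exact ⟨fun ⟨hf, hderiv⟩ s => hderiv s ▸ (hf s).hasDerivAt,
    fun h => ⟨fun s => (h s).differentiableAt, fun s => (h s).deriv⟩⟩

theorem eigenfunction_iff_eq_mul_exp_gaugePhase (hV : Continuous V) :
    (Differentiable ℝ f ∧ ∀ s, -I * deriv f s + V s * f s = μ * f s) ↔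
      ∀ s, f s = f 0 * exp (I * gaugePhase V μ s) := by
  have exponent_deriv (s : ℝ) :
      HasDerivAt (fun r : ℝ => I * (gaugePhase V μ r : ℂ)) (I * (μ - V s)) s := by
    simpa only [ofReal_sub] using (hasDerivAt_gaugePhase hV s).ofReal_comp.const_mul I
  simpa only [gaugePhase_zero, ofReal_zero, mul_zero, sub_zero, smul_eq_mul, mul_comm (f 0)] using
    eigenfunction_iff_hasDerivAt.trans (forall_hasDerivAt_smul_iff_eq_exp_smul exponent_deriv 0)

end Eigenfunction

theorem fmV_eq_fmV_zero_mul_exp_gaugePhase (L : ℝ) (V : ℝ → ℝ) (m : ℤ) (s : ℝ) :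
    fmV L V m s = fmV L V m 0 * exp (I * gaugePhase V (muV L V m) s) := by
  simp [fmV, gaugePhase]

theorem stmt_0 (L : ℝ) (hL : 0 < L) (V : ℝ → ℝ) (hVc : Continuous V)
    (hVper : ∀ s, V (s + L) = V s) :
    (∀ (μ₀ : ℝ) (f : ℝ → ℂ), Differentiable ℝ f → (∀ s, f (s + L) = f s) →
      (∃ s, f s ≠ 0) →
      (∀ s, -Complex.I * deriv f s + (V s : ℂ) * f s = (μ₀ : ℂ) * f s) →
      ∃ m : ℤ, μ₀ = muV L V m ∧
        ∀ s : ℝ, f s = f 0 *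
          Complex.exp (Complex.I * ((μ₀ * s - ∫ ς in (0:ℝ)..s, V ς : ℝ) : ℂ))) ∧
    (∀ m : ℤ,
      (∀ s : ℝ, fmV L V m (s + L) = fmV L V m s) ∧
      Differentiable ℝ (fmV L V m) ∧
      (∀ s : ℝ, -Complex.I * deriv (fmV L V m) s + (V s : ℂ) * fmV L V m s
        = (muV L V m : ℂ) * fmV L V m s)) := by
  have hVint (a b : ℝ) : IntervalIntegrable V volume a b := hVc.intervalIntegrable a b
  constructor
  · intro μ₀ f hf hfper ⟨t, hft⟩ heq
    have hsol : ∀ s, f s = f 0 * exp (I * gaugePhase V μ₀ s) :=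
      (eigenfunction_iff_eq_mul_exp_gaugePhase hVc).1 ⟨hf, heq⟩
    have hf0 : f 0 ≠ 0 := fun h0 => hft (by rw [hsol, h0, zero_mul])
    have hper : Function.Periodic (fun s : ℝ => f 0 * exp (I * gaugePhase V μ₀ s)) L :=
      funext hsol ▸ hfper
    obtain ⟨m, hm⟩ := (periodic_const_mul_exp_gaugePhase_iff hL.ne' hVint hVper hf0).1 hper
    exact ⟨m, hm, hsol⟩
  · intro m
    have hc : ((√L)⁻¹ : ℂ) ≠ 0 := inv_ne_zero (ofReal_ne_zero.2 (Real.sqrt_pos.2 hL).ne')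
    exact ⟨(periodic_const_mul_exp_gaugePhase_iff hL.ne' hVint hVper hc).2 ⟨m, rfl⟩,
      (eigenfunction_iff_eq_mul_exp_gaugePhase hVc).2 (fmV_eq_fmV_zero_mul_exp_gaugePhase L V m)⟩
end

section
/- The family { f_{m,V} restricted to [0,L) : m ∈ ℤ } is an orthonormal basis (Hilbert basis) of the complex Hilbert space L²((0,L); ℂ) with Lebesgue measure: the functions are pairwise orthogonal, each has L²-norm 1, and their closed linear span is all of L²((0,L); ℂ). -/
open MeasureTheory

/-!
Dividing `f_{m,V}` by the `m`-th normalized Fourier monomial of `(0, L)` leaves a factor of modulus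
one that does not depend on `m`. Multiplication by this factor is a unitary operator of `L²`, so it
carries the Fourier basis to another Hilbert basis.
-/

open scoped ENNReal

section CircleSMul

variable {α E : Type*} [MeasurableSpace α] {μ : Measure α} {p : ℝ≥0∞}
  [NormedAddCommGroup E] [NormedSpace ℂ E] {u : α → Circle} {f : α → E}

lemma eLpNorm_circle_smul : eLpNorm (fun x ↦ u x • f x) p μ = eLpNorm f p μ :=
  eLpNorm_congr_norm_ae <| .of_forall fun x ↦ by
    rw [Circle.smul_def, norm_smul, Circle.norm_coe, one_mul]

lemma memLp_circle_smul (hu : AEStronglyMeasurable u μ) (hf : MemLp f p μ) :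
    MemLp (fun x ↦ u x • f x) p μ :=
  ⟨hu.smul hf.aestronglyMeasurable, eLpNorm_circle_smul.trans_lt hf.eLpNorm_lt_top⟩

variable [Fact (1 ≤ p)]

/-- Pointwise multiplication by a function `u` of modulus one, as a linear isometry of `Lᵖ`. -/
noncomputable def circleSMulLp (hu : AEStronglyMeasurable u μ) : Lp E p μ →ₗᵢ[ℂ] Lp E p μ where
  toFun f := (memLp_circle_smul hu (Lp.memLp f)).toLp
  map_add' f g := by
    rw [← MemLp.toLp_add]
    refine MemLp.toLp_congr _ _ ?_
    filter_upwards [Lp.coeFn_add f g] with x hx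
    rw [hx, Pi.add_apply, Pi.add_apply, smul_add]
  map_smul' c f := by
    rw [← MemLp.toLp_const_smul]
    refine MemLp.toLp_congr _ _ ?_
    filter_upwards [Lp.coeFn_smul c f] with x hx
    rw [hx, Pi.smul_apply, Pi.smul_apply, smul_comm, RingHom.id_apply]
  norm_map' f := by
    rw [Lp.norm_def f, ← eLpNorm_circle_smul (u := u)]
    exact Lp.norm_toLp _ (memLp_circle_smul hu (Lp.memLp f))

lemma coeFn_circleSMulLp (hu : AEStronglyMeasurable u μ) (f : Lp E p μ) :
    circleSMulLp hu f =ᵐ[μ] fun x ↦ u x • f x :=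
  (memLp_circle_smul hu (Lp.memLp f)).coeFn_toLp

lemma circleSMulLp_surjective (hu : AEStronglyMeasurable u μ) :
    Function.Surjective (circleSMulLp (E := E) (p := p) hu) := fun f ↦ by
  refine ⟨circleSMulLp hu.inv f, Lp.ext ?_⟩
  filter_upwards [coeFn_circleSMulLp hu (circleSMulLp hu.inv f), coeFn_circleSMulLp hu.inv f]
    with x hx hinv
  rw [hx, hinv, Pi.inv_apply, smul_inv_smul]

end CircleSMul

section MapHilbertBasis

variable {ι 𝕜 E F : Type*} [RCLike 𝕜] [NormedAddCommGroup E] [InnerProductSpace 𝕜 E]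
  [NormedAddCommGroup F] [InnerProductSpace 𝕜 F]

/-- The image of a Hilbert basis under a unitary map. -/
noncomputable def mapHilbertBasis (b : HilbertBasis ι 𝕜 E) (U : E ≃ₗᵢ[𝕜] F) :
    HilbertBasis ι 𝕜 F :=
  .ofRepr (U.symm.trans b.repr)

lemma mapHilbertBasis_apply (b : HilbertBasis ι 𝕜 E) (U : E ≃ₗᵢ[𝕜] F) (i : ι) :
    mapHilbertBasis b U i = U (b i) :=
  rfl

end MapHilbertBasis

section IntervalFourier

variable {a b : ℝ}

lemma fourierCoeffOn_fourier (hab : a < b) (m n : ℤ) :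
    fourierCoeffOn hab (fun x ↦ fourier m (x : AddCircle (b - a))) n =
      if n = m then 1 else 0 := by
  have : Fact (0 < b - a) := ⟨sub_pos.2 hab⟩
  rw [← Pi.single_apply, ← fourierCoeff_fourier (T := b - a), fourierCoeffOn_eq_integral,
    fourierCoeff_eq_intervalIntegral _ _ a, add_sub_cancel]

lemma ae_eq_zero_of_fourierCoeffOn_eq_zero (hab : a < b) {f : ℝ → ℂ}
    (hf : MemLp f 2 (volume.restrict (Set.Ioo a b))) (hcoeff : ∀ n, fourierCoeffOn hab f n = 0) :
    f =ᵐ[volume.restrict (Set.Ioo a b)] 0 := by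
  rw [restrict_Ioo_eq_restrict_Ioc] at hf ⊢
  have parseval : 0 = (b - a)⁻¹ * ∫ x in a..b, ‖f x‖ ^ 2 := by
    simpa [hcoeff] using tsum_sq_fourierCoeffOn hab hf
  have integral_eq_zero : ∫ x in Set.Ioc a b, ‖f x‖ ^ 2 = 0 := by
    rw [← intervalIntegral.integral_of_le hab.le]
    exact (mul_eq_zero.1 parseval.symm).resolve_left (inv_ne_zero (sub_pos.2 hab).ne')
  have hsq : Integrable (fun x ↦ ‖f x‖ ^ 2) (volume.restrict (Set.Ioc a b)) :=
    (memLp_two_iff_integrable_sq_norm hf.aestronglyMeasurable).1 hf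
  filter_upwards [(integral_eq_zero_iff_of_nonneg (fun x ↦ by positivity) hsq).1 integral_eq_zero]
    with x hx
  simpa using hx

/-- The Fourier monomials of period `b - a`, scaled to have norm one in `L²((a, b))` when
`a < b`. -/
noncomputable def intervalFourier (a b : ℝ) (n : ℤ) (x : ℝ) : ℂ :=
  (√(b - a) : ℂ)⁻¹ * fourier n (x : AddCircle (b - a))

lemma memLp_intervalFourier (a b : ℝ) (n : ℤ) (p : ℝ≥0∞) :
    MemLp (intervalFourier a b n) p (volume.restrict (Set.Ioo a b)) := by
  have hmeas : Measurable fun x : ℝ ↦ fourier n (x : AddCircle (b - a)) :=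
    ((fourier n).continuous.comp (AddCircle.continuous_mk' _)).measurable
  refine .of_bound (hmeas.const_mul _).aestronglyMeasurable (‖(√(b - a) : ℂ)⁻¹‖) ?_
  exact .of_forall fun x ↦ by
    rw [intervalFourier, norm_mul, fourier_apply, Circle.norm_coe, mul_one]

/-- The class of `intervalFourier a b n` in `L²((a, b))`. -/
noncomputable def intervalFourierLp (a b : ℝ) (n : ℤ) :
    Lp ℂ 2 (volume.restrict (Set.Ioo a b)) :=
  (memLp_intervalFourier a b n 2).toLp

lemma coeFn_intervalFourierLp (a b : ℝ) (n : ℤ) :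
    intervalFourierLp a b n =ᵐ[volume.restrict (Set.Ioo a b)] intervalFourier a b n :=
  MemLp.coeFn_toLp _

lemma inner_intervalFourierLp (hab : a < b) (n : ℤ)
    (g : Lp ℂ 2 (volume.restrict (Set.Ioo a b))) :
    inner ℂ (intervalFourierLp a b n) g = √(b - a) * fourierCoeffOn hab g n := by
  have sqrt_inv : (√(b - a) : ℂ)⁻¹ = √(b - a) * (b - a)⁻¹ := by
    rw [← Complex.ofReal_inv, ← Real.sqrt_div_self, div_eq_mul_inv, Complex.ofReal_mul]
  calc inner ℂ (intervalFourierLp a b n) g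
      = ∫ x in Set.Ioo a b, inner ℂ (intervalFourier a b n x) (g x) := by
        rw [L2.inner_def]
        refine integral_congr_ae ?_
        filter_upwards [coeFn_intervalFourierLp a b n] with x hx
        rw [hx]
    _ = ∫ x in Set.Ioo a b, (√(b - a) : ℂ)⁻¹ * (fourier (-n) (x : AddCircle (b - a)) • g x) := by
        simp [intervalFourier, mul_left_comm, mul_comm]
    _ = √(b - a) * fourierCoeffOn hab g n := by
        rw [integral_const_mul, ← integral_Ioc_eq_integral_Ioo,
          ← intervalIntegral.integral_of_le hab.le, fourierCoeffOn_eq_integral, sqrt_inv]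
        simp [mul_assoc]

lemma fourierCoeffOn_intervalFourierLp (hab : a < b) (m n : ℤ) :
    fourierCoeffOn hab (intervalFourierLp a b m) n =
      (√(b - a) : ℂ)⁻¹ * if n = m then 1 else 0 := by
  have hcoe : intervalFourierLp a b m =ᵐ[volume.restrict (Set.Ioc a b)] intervalFourier a b m := by
    rw [← restrict_Ioo_eq_restrict_Ioc]
    exact coeFn_intervalFourierLp a b m
  rw [fourierCoeffOn_congr_ae hab hcoe, ← fourierCoeffOn_fourier hab]
  exact fourierCoeffOn.const_mul _ _ n hab

lemma orthonormal_intervalFourierLp (hab : a < b) : Orthonormal ℂ (intervalFourierLp a b) := by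
  have sqrt_ne_zero : (√(b - a) : ℂ) ≠ 0 :=
    Complex.ofReal_ne_zero.2 (Real.sqrt_ne_zero'.2 (sub_pos.2 hab))
  refine orthonormal_iff_ite.2 fun m n ↦ ?_
  rw [inner_intervalFourierLp hab, fourierCoeffOn_intervalFourierLp,
    mul_inv_cancel_left₀ sqrt_ne_zero]

lemma span_intervalFourierLp_orthogonal_eq_bot (hab : a < b) :
    (Submodule.span ℂ (Set.range (intervalFourierLp a b)))ᗮ = ⊥ := by
  refine (Submodule.eq_bot_iff _).2 fun g hg ↦ ?_
  have hcoeff (n : ℤ) : fourierCoeffOn hab g n = 0 := by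
    have inner_eq_zero := hg _ (Submodule.subset_span ⟨n, rfl⟩)
    rw [inner_intervalFourierLp hab] at inner_eq_zero
    exact (mul_eq_zero.1 inner_eq_zero).resolve_left <|
      Complex.ofReal_ne_zero.2 (Real.sqrt_ne_zero'.2 (sub_pos.2 hab))
  exact Lp.eq_zero_iff_ae_eq_zero.2 <|
    ae_eq_zero_of_fourierCoeffOn_eq_zero hab (Lp.memLp g) hcoeff

/-- The Fourier basis of `L²((a, b))`. -/
noncomputable def intervalFourierBasis (hab : a < b) :
    HilbertBasis ℤ ℂ (Lp ℂ 2 (volume.restrict (Set.Ioo a b))) :=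
  .mkOfOrthogonalEqBot (orthonormal_intervalFourierLp hab)
    (span_intervalFourierLp_orthogonal_eq_bot hab)

lemma coe_intervalFourierBasis (hab : a < b) :
    ⇑(intervalFourierBasis hab) = intervalFourierLp a b :=
  HilbertBasis.coe_mkOfOrthogonalEqBot _ _

end IntervalFourier

section Gauge

variable {L : ℝ} {V : ℝ → ℝ}

/-- The gauge factor `exp(i ((2π/L) Φ_V s - ∫_0^s V))`, the part of `f_{m,V}` independent of `m`. -/
noncomputable def gaugeFactor (L : ℝ) (V : ℝ → ℝ) (s : ℝ) : Circle :=
  Circle.exp (2 * Real.pi / L * fluxV L V * s - ∫ ς in (0:ℝ)..s, V ς)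

lemma aestronglyMeasurable_gaugeFactor (hV : IntervalIntegrable V volume 0 L) :
    AEStronglyMeasurable (gaugeFactor L V) (volume.restrict (Set.Ioo 0 L)) := by
  have hprim : ContinuousOn (fun s ↦ ∫ ς in (0:ℝ)..s, V ς) (Set.uIcc 0 L) :=
    intervalIntegral.continuousOn_primitive_interval' hV Set.left_mem_uIcc
  have hgauge : ContinuousOn (gaugeFactor L V) (Set.Ioo 0 L) :=
    Circle.exp.continuous.comp_continuousOn <|
      (by fun_prop : Continuous fun s ↦ 2 * Real.pi / L * fluxV L V * s).continuousOn.sub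
        (hprim.mono (Set.Ioo_subset_Icc_self.trans Set.Icc_subset_uIcc))
  exact hgauge.aestronglyMeasurable measurableSet_Ioo

lemma gaugeFactor_smul_intervalFourier (L : ℝ) (V : ℝ → ℝ) (m : ℤ) (s : ℝ) :
    gaugeFactor L V s • intervalFourier 0 L m s = fmV L V m s := by
  rw [Circle.smul_def, smul_eq_mul, gaugeFactor, intervalFourier, fmV, muV, Circle.coe_exp,
    fourier_coe_apply, sub_zero, mul_left_comm, ← Complex.exp_add]
  congr 2
  push_cast
  ring

/-- The Hilbert basis of `L²((0, L))` obtained by multiplying the Fourier basis by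
`gaugeFactor L V`. -/
noncomputable def gaugedFourierBasis (hL : 0 < L) (hV : IntervalIntegrable V volume 0 L) :
    HilbertBasis ℤ ℂ (Lp ℂ 2 (volume.restrict (Set.Ioo 0 L))) :=
  mapHilbertBasis (intervalFourierBasis hL) <|
    .ofSurjective (circleSMulLp (aestronglyMeasurable_gaugeFactor hV)) (circleSMulLp_surjective _)

lemma coeFn_gaugedFourierBasis (hL : 0 < L) (hV : IntervalIntegrable V volume 0 L) (m : ℤ) :
    gaugedFourierBasis hL hV m =ᵐ[volume.restrict (Set.Ioo 0 L)] fmV L V m := by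
  rw [gaugedFourierBasis, mapHilbertBasis_apply, coe_intervalFourierBasis,
    LinearIsometryEquiv.coe_ofSurjective]
  filter_upwards [coeFn_circleSMulLp (aestronglyMeasurable_gaugeFactor hV)
    (intervalFourierLp 0 L m), coeFn_intervalFourierLp 0 L m] with s hgauge hfourier
  rw [hgauge, hfourier, gaugeFactor_smul_intervalFourier]

end Gauge

theorem stmt_1_general (L : ℝ) (hL : 0 < L) (V : ℝ → ℝ) (hV : IntervalIntegrable V volume 0 L) :
    ∃ F : ℤ → Lp ℂ 2 (volume.restrict (Set.Ioo (0:ℝ) L)),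
      (∀ m : ℤ, (⇑(F m) : ℝ → ℂ) =ᵐ[volume.restrict (Set.Ioo (0:ℝ) L)] fmV L V m) ∧
      Orthonormal ℂ F ∧
      (Submodule.span ℂ (Set.range F)).topologicalClosure = ⊤ :=
  ⟨gaugedFourierBasis hL hV, coeFn_gaugedFourierBasis hL hV,
    (gaugedFourierBasis hL hV).orthonormal, (gaugedFourierBasis hL hV).dense_span⟩

/-- The family `{f_{m,V}|_{(0,L)} : m ∈ ℤ}` is an orthonormal (Hilbert) basis of
`L²((0,L); ℂ)`: orthonormal, and with dense linear span. -/
theorem stmt_1 (L : ℝ) (hL : 0 < L) (V : ℝ → ℝ) (hVc : Continuous V)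
    (hVper : ∀ s, V (s + L) = V s) :
    ∃ F : ℤ → Lp ℂ 2 (volume.restrict (Set.Ioo (0:ℝ) L)),
      (∀ m : ℤ, (⇑(F m) : ℝ → ℂ) =ᵐ[volume.restrict (Set.Ioo (0:ℝ) L)] fmV L V m) ∧
      Orthonormal ℂ F ∧
      (Submodule.span ℂ (Set.range F)).topologicalClosure = ⊤ :=
  stmt_1_general L hL V (hVc.intervalIntegrable 0 L)
end

section
/- Let f : ℝ → ℂ be smooth and 2π-periodic, with Fourier coefficients f̂(n) = (1/(2π)) ∫_0^{2π} f(ζ) e^{−inζ} dζ for n ∈ ℤ. Then for every s ∈ ℝ the series ∑_{n ≥ 0} f̂(n) e^{ins} converges absolutely and lim_{r → 1⁻} (1/(2π)) ∫_0^{2π} f(ζ) / (1 − r e^{i(s−ζ)}) dζ = ∑_{n ≥ 0} f̂(n) e^{ins}. -/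
open MeasureTheory

/-!
Expanding the Cauchy kernel as a geometric series turns the Cauchy integral at `z`, `‖z‖ < 1`, into
the power series `∑ f̂(n) zⁿ`. If the derivative of `f` is square integrable, then
`∑ |n f̂(n)|² < ∞` by Parseval's identity, so `|f̂(n)| ≤ n⁻² + |n f̂(n)|²` is summable. The power
series therefore converges at `z = e^{is}`, and Abel's limit theorem along the radius through
`e^{is}` gives the boundary value of the Cauchy integral.
-/

section CompactMemLp

variable {X E : Type*} [TopologicalSpace X] [T2Space X] [MeasurableSpace X]
  [OpensMeasurableSpace X] [NormedAddCommGroup E] {μ : Measure X} [IsFiniteMeasureOnCompacts μ]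
  {K : Set X} {f : X → E}

theorem memLp_restrict_of_continuousOn_isCompact (p : ENNReal) (hK : IsCompact K)
    (hf : ContinuousOn f K) : MemLp f p (μ.restrict K) := by
  have : IsFiniteMeasure (μ.restrict K) := ⟨by simpa using hK.measure_lt_top⟩
  obtain ⟨C, hC⟩ := hK.exists_bound_of_continuousOn hf
  exact MemLp.of_bound (hf.aestronglyMeasurable_of_isCompact hK hK.measurableSet) C
    (ae_restrict_of_forall_mem hK.measurableSet hC)

end CompactMemLp

section FourierDecay

open Set

variable {a b : ℝ} {f f' : ℝ → ℂ}

theorem norm_fourierCoeffOn_of_hasDeriv_right (hab : a < b) {n : ℤ} (hn : n ≠ 0)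
    (hf : ContinuousOn f (Icc a b)) (hff' : ∀ x ∈ Ioo a b, HasDerivWithinAt f (f' x) (Ioi x) x)
    (hf' : IntervalIntegrable f' volume a b) (hfab : f a = f b) :
    ‖fourierCoeffOn hab f n‖ =
      (b - a) / (2 * Real.pi) * (|(n : ℝ)|⁻¹ * ‖fourierCoeffOn hab f' n‖) := by
  rw [fourierCoeffOn_of_hasDeriv_right hab hn (by rwa [uIcc_of_le hab.le])
    (by rwa [min_eq_left hab.le, max_eq_right hab.le]) hf', hfab, ← Complex.ofReal_sub]
  simp only [sub_self, mul_zero, zero_sub, norm_mul, norm_neg, norm_div, norm_one,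
    Complex.norm_real, Complex.norm_I, Complex.norm_intCast, Complex.norm_ofNat,
    Real.norm_eq_abs, abs_of_pos Real.pi_pos, abs_of_pos (sub_pos.2 hab)]
  ring

theorem summable_norm_fourierCoeffOn_of_hasDeriv_right (hab : a < b)
    (hf : ContinuousOn f (Icc a b)) (hff' : ∀ x ∈ Ioo a b, HasDerivWithinAt f (f' x) (Ioi x) x)
    (hf' : MemLp f' 2 (volume.restrict (Ioc a b))) (hfab : f a = f b) :
    Summable fun n : ℤ ↦ ‖fourierCoeffOn hab f n‖ := by
  have hf'_int : IntervalIntegrable f' volume a b :=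
    (intervalIntegrable_iff_integrableOn_Ioc_of_le hab.le).2 (hf'.integrable one_le_two)
  have bound_summable : Summable fun n : ℤ ↦
      (b - a) / (2 * Real.pi) * (1 / (n : ℝ) ^ 2 + ‖fourierCoeffOn hab f' n‖ ^ 2) :=
    ((Real.summable_one_div_int_pow.2 one_lt_two).add
      (hasSum_sq_fourierCoeffOn hab hf').summable).mul_left _
  refine bound_summable.of_norm_bounded_eventually ?_
  filter_upwards [(finite_singleton (0 : ℤ)).compl_mem_cofinite] with n hn
  rw [norm_norm, norm_fourierCoeffOn_of_hasDeriv_right hab hn hf hff' hf'_int hfab]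
  have scale_nonneg : 0 ≤ (b - a) / (2 * Real.pi) := by
    have := sub_pos.2 hab
    positivity
  refine mul_le_mul_of_nonneg_left ?_ scale_nonneg
  rw [one_div, ← sq_abs, ← inv_pow]
  nlinarith [sq_nonneg (|(n : ℝ)|⁻¹ - ‖fourierCoeffOn hab f' n‖),
    sq_nonneg (|(n : ℝ)|⁻¹), sq_nonneg ‖fourierCoeffOn hab f' n‖]

end FourierDecay

section CauchyIntegral

open Filter Topology

variable {E : Type*} [NormedAddCommGroup E] [NormedSpace ℂ E] {a b : ℝ}

/-- The normalized Cauchy integral at `z` of the `(b - a)`-periodic extension of `f` from `(a, b]`,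
where the period interval is identified with the unit circle by `x ↦ exp (2πix / (b - a))`. -/
noncomputable def cauchyIntegralOn (a b : ℝ) (f : ℝ → E) (z : ℂ) : E :=
  (1 / (b - a)) • ∫ x in a..b, (1 - z * fourier (-1) (x : AddCircle (b - a)))⁻¹ • f x

theorem hasSum_pow_smul_fourierCoeffOn (hab : a < b) {f : ℝ → E}
    (hf : IntervalIntegrable f volume a b) {z : ℂ} (hz : ‖z‖ < 1) :
    HasSum (fun n : ℕ ↦ z ^ n • fourierCoeffOn hab f n) (cauchyIntegralOn a b f z) := by
  have norm_character (x : ℝ) : ‖fourier (-1) (x : AddCircle (b - a))‖ = 1 := Circle.norm_coe _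
  have character_pow (n : ℕ) (x : ℝ) :
      fourier (-1) (x : AddCircle (b - a)) ^ n = fourier (-n) (x : AddCircle (b - a)) := by
    simp only [fourier_coe_apply, ← Complex.exp_nat_mul]
    push_cast
    ring_nf
  have term_eq (n : ℕ) : z ^ n • fourierCoeffOn hab f n = (1 / (b - a)) •
      ∫ x in a..b, (z * fourier (-1) (x : AddCircle (b - a))) ^ n • f x := by
    simp only [fourierCoeffOn_eq_integral, mul_pow, character_pow, mul_smul,
      intervalIntegral.integral_smul]
    rw [smul_comm]
  simp only [term_eq, cauchyIntegralOn]
  refine (intervalIntegral.hasSum_integral_of_dominated_convergence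
    (fun n x ↦ ‖z‖ ^ n * ‖f x‖) (fun n ↦ ?_) (fun n ↦ ?_) ?_ ?_ ?_).const_smul _
  · have : Continuous fun x : ℝ ↦ (z * fourier (-1) (x : AddCircle (b - a))) ^ n := by fun_prop
    exact this.aestronglyMeasurable.smul hf.def'.aestronglyMeasurable
  · exact .of_forall fun x _ ↦ by rw [norm_smul, norm_pow, norm_mul, norm_character, mul_one]
  · exact .of_forall fun x _ ↦
      (summable_geometric_of_lt_one (norm_nonneg z) hz).mul_right ‖f x‖
  · simpa only [tsum_mul_right] using hf.norm.const_mul _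
  · refine .of_forall fun x _ ↦ (hasSum_geometric_of_norm_lt_one ?_).smul_const (f x)
    rwa [norm_mul, norm_character, mul_one]

theorem tendsto_cauchyIntegralOn_nhdsLT_one (hab : a < b) {f : ℝ → ℂ}
    (hf : IntervalIntegrable f volume a b) {w l : ℂ} (hw : ‖w‖ ≤ 1)
    (hl : Tendsto (fun N ↦ ∑ n ∈ Finset.range N, fourierCoeffOn hab f n * w ^ n) atTop (𝓝 l)) :
    Tendsto (fun r : ℝ ↦ cauchyIntegralOn a b f (r * w)) (𝓝[<] 1) (𝓝 l) := by
  refine (tendsto_map'_iff.1 (Complex.tendsto_tsum_powerSeries_nhdsWithin_lt hl)).congr' ?_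
  filter_upwards [Ioo_mem_nhdsLT zero_lt_one] with r hr
  have norm_lt_one : ‖(r : ℂ) * w‖ < 1 := by
    rw [norm_mul, Complex.norm_of_nonneg hr.1.le]
    exact mul_lt_one_of_nonneg_of_lt_one_left hr.1.le hr.2 hw
  rw [← (hasSum_pow_smul_fourierCoeffOn hab hf norm_lt_one).tsum_eq]
  refine tsum_congr fun n ↦ ?_
  rw [smul_eq_mul, mul_pow]
  ring

end CauchyIntegral

section TwoPi

theorem fourierCoeffOn_zero_two_pi (f : ℝ → ℂ) (n : ℤ) :
    fourierCoeffOn Real.two_pi_pos f n = ((1 / (2 * Real.pi) : ℝ) : ℂ) *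
      ∫ x in (0 : ℝ)..(2 * Real.pi), f x * Complex.exp (-Complex.I * n * x) := by
  have character_eq (x : ℝ) : fourier (-n) (x : AddCircle (2 * Real.pi - 0)) =
      Complex.exp (-Complex.I * n * x) := by
    rw [fourier_coe_apply]
    congr 1
    push_cast
    field_simp
    ring
  simp only [fourierCoeffOn_eq_integral, character_eq, smul_eq_mul, Complex.real_smul, sub_zero,
    mul_comm (f _)]

theorem cauchyIntegralOn_zero_two_pi (f : ℝ → ℂ) (r s : ℝ) :
    cauchyIntegralOn 0 (2 * Real.pi) f (r * Complex.exp (Complex.I * s)) =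
      ((1 / (2 * Real.pi) : ℝ) : ℂ) * ∫ x in (0 : ℝ)..(2 * Real.pi),
        f x / (1 - r * Complex.exp (Complex.I * ((s - x : ℝ) : ℂ))) := by
  have kernel_eq (x : ℝ) : Complex.exp (Complex.I * s) *
      fourier (-1) (x : AddCircle (2 * Real.pi - 0)) =
        Complex.exp (Complex.I * ((s - x : ℝ) : ℂ)) := by
    rw [fourier_coe_apply, ← Complex.exp_add]
    congr 1
    push_cast
    field_simp
    ring
  simp only [cauchyIntegralOn, mul_assoc, kernel_eq, smul_eq_mul, Complex.real_smul, sub_zero,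
    div_eq_inv_mul (f _)]

end TwoPi

theorem stmt_4_general (f f' : ℝ → ℂ) (hf : ContinuousOn f (Set.Icc 0 (2 * Real.pi)))
    (hff' : ∀ x ∈ Set.Ioo 0 (2 * Real.pi), HasDerivWithinAt f (f' x) (Set.Ioi x) x)
    (hf' : MemLp f' 2 (volume.restrict (Set.Ioc 0 (2 * Real.pi))))
    (hfper : f 0 = f (2 * Real.pi))
    (fc : ℕ → ℂ)
    (hfc : ∀ n : ℕ, fc n = ((1 / (2 * Real.pi) : ℝ) : ℂ) *
      ∫ ζ in (0:ℝ)..(2 * Real.pi), f ζ * Complex.exp (-Complex.I * (n : ℂ) * (ζ : ℂ)))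
    (s : ℝ) :
    Summable (fun n : ℕ => ‖fc n * Complex.exp (Complex.I * (n : ℂ) * (s : ℂ))‖) ∧
    Filter.Tendsto
      (fun r : ℝ => ((1 / (2 * Real.pi) : ℝ) : ℂ) *
        ∫ ζ in (0:ℝ)..(2 * Real.pi),
          f ζ / (1 - (r : ℂ) * Complex.exp (Complex.I * ((s - ζ : ℝ) : ℂ))))
      (nhdsWithin (1 : ℝ) (Set.Iio 1))
      (nhds (∑' n : ℕ, fc n * Complex.exp (Complex.I * (n : ℂ) * (s : ℂ)))) := by
  have coeff_eq (n : ℕ) : fc n = fourierCoeffOn Real.two_pi_pos f n := by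
    rw [hfc, fourierCoeffOn_zero_two_pi, Int.cast_natCast]
  have exp_eq_pow (n : ℕ) : Complex.exp (Complex.I * n * s) = Complex.exp (Complex.I * s) ^ n := by
    rw [← Complex.exp_nat_mul, mul_left_comm, mul_assoc]
  have norm_exp : ‖Complex.exp (Complex.I * s)‖ = 1 := Complex.norm_exp_I_mul_ofReal s
  have hf_int : IntervalIntegrable f volume 0 (2 * Real.pi) :=
    hf.intervalIntegrable_of_Icc Real.two_pi_pos.le
  have summable_terms : Summable fun n : ℕ ↦
      ‖fourierCoeffOn Real.two_pi_pos f n * Complex.exp (Complex.I * s) ^ n‖ := by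
    simpa only [norm_mul, norm_pow, norm_exp, one_pow, mul_one, Function.comp_def] using
      (summable_norm_fourierCoeffOn_of_hasDeriv_right Real.two_pi_pos hf hff' hf'
        hfper).comp_injective Nat.cast_injective
  simp only [coeff_eq, exp_eq_pow, ← cauchyIntegralOn_zero_two_pi]
  exact ⟨summable_terms, tendsto_cauchyIntegralOn_nhdsLT_one Real.two_pi_pos hf_int norm_exp.le
    summable_terms.of_norm.hasSum.tendsto_sum_nat⟩

/-- Abel/Cauchy-integral representation of the Hardy-space projection on the circle:
for smooth `2π`-periodic `f`, the series `∑_{n ≥ 0} f̂(n) e^{ins}` converges absolutely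
and equals the boundary limit of the Cauchy integral. -/
theorem stmt_4 (f : ℝ → ℂ) (hf : ContDiff ℝ (⊤ : ℕ∞) f)
    (hfper : ∀ x : ℝ, f (x + 2 * Real.pi) = f x)
    (fc : ℕ → ℂ)
    (hfc : ∀ n : ℕ, fc n = ((1 / (2 * Real.pi) : ℝ) : ℂ) *
      ∫ ζ in (0:ℝ)..(2 * Real.pi), f ζ * Complex.exp (-Complex.I * (n : ℂ) * (ζ : ℂ))) :
    ∀ s : ℝ,
      Summable (fun n : ℕ => ‖fc n * Complex.exp (Complex.I * (n : ℂ) * (s : ℂ))‖) ∧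
      Filter.Tendsto
        (fun r : ℝ => ((1 / (2 * Real.pi) : ℝ) : ℂ) *
          ∫ ζ in (0:ℝ)..(2 * Real.pi),
            f ζ / (1 - (r : ℂ) * Complex.exp (Complex.I * ((s - ζ : ℝ) : ℂ))))
        (nhdsWithin (1 : ℝ) (Set.Iio 1))
        (nhds (∑' n : ℕ, fc n * Complex.exp (Complex.I * (n : ℂ) * (s : ℂ)))) :=
  stmt_4_general f (deriv f) hf.continuous.continuousOn
    (fun x _ ↦ (hf.differentiable (by simp) x).hasDerivAt.hasDerivWithinAt)
    ((memLp_restrict_of_continuousOn_isCompact 2 isCompact_Icc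
      (hf.continuous_deriv (by simp)).continuousOn).mono_measure
        (Measure.restrict_mono Set.Ioc_subset_Icc_self le_rfl))
    (by simpa using (hfper 0).symm) fc hfc
end

section
/- Let R > 0 and let B : [0,R] → ℝ be continuous, nonnegative and nonincreasing. Define a(r) = (1/r) ∫_0^r B(ρ) ρ dρ for r ∈ (0,R]. Then for every integer m < 0 and every r ∈ (0,R]: ( m/r − a(r) )² − B(r) ≥ (2/r²) ∫_0^r ( B(ρ) − B(r) ) ρ dρ ≥ 0. -/
open MeasureTheory

/-!
Write `Φ = ∫₀ʳ B(ρ) ρ dρ`, so that `a(r) = Φ / r` and `∫₀ʳ (B(ρ) - B(r)) ρ dρ = Φ - B(r) r² / 2`.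
The terms in `B(r)` then cancel in the first inequality, which after multiplication by `r²` reads
`2 Φ ≤ (m - Φ)²`. Completing the square, `(m - Φ)² - 2 Φ = (Φ - (m + 1))² - (2 m + 1)`, and this is
nonnegative for every real `Φ` as soon as `m ≤ -1/2`. The second inequality holds because
`B(ρ) ≥ B(r)` for `ρ ≤ r`.
-/

theorem two_mul_le_sub_sq {K : Type*} [CommRing K] [LinearOrder K] [IsStrictOrderedRing K]
    {m : K} (hm : 2 * m + 1 ≤ 0) (Φ : K) : 2 * Φ ≤ (m - Φ) ^ 2 := by
  have complete_square : (m - Φ) ^ 2 = 2 * Φ + (Φ - (m + 1)) ^ 2 - (2 * m + 1) := by ring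
  linarith [complete_square, sq_nonneg (Φ - (m + 1))]

theorem integral_sub_const_mul_id {f : ℝ → ℝ} {a b : ℝ}
    (hf : IntervalIntegrable (fun x => f x * x) volume a b) (c : ℝ) :
    ∫ x in a..b, (f x - c) * x = (∫ x in a..b, f x * x) - c * ((b ^ 2 - a ^ 2) / 2) := by
  have hc : IntervalIntegrable (fun x => c * x) volume a b :=
    (continuous_const_mul c).intervalIntegrable a b
  simp only [sub_mul]
  rw [intervalIntegral.integral_sub hf hc, intervalIntegral.integral_const_mul, integral_id]

theorem integral_sub_right_mul_nonneg_of_antitoneOn {f g : ℝ → ℝ} {a b : ℝ} (hab : a ≤ b)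
    (hf : AntitoneOn f (Set.Icc a b)) (hg : ∀ x ∈ Set.Icc a b, 0 ≤ g x) :
    0 ≤ ∫ x in a..b, (f x - f b) * g x :=
  intervalIntegral.integral_nonneg hab fun x hx =>
    mul_nonneg (sub_nonneg.2 (hf hx (Set.right_mem_Icc.2 hab) hx.2)) (hg x hx)

theorem two_div_sq_mul_integral_le_sq_sub {B : ℝ → ℝ} {r m : ℝ} (hr : r ≠ 0)
    (hB : IntervalIntegrable (fun ρ => B ρ * ρ) volume 0 r) (hm : m ≤ -1 / 2) (c : ℝ) :
    2 / r ^ 2 * ∫ ρ in (0 : ℝ)..r, (B ρ - c) * ρ ≤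
      (m / r - 1 / r * ∫ ρ in (0 : ℝ)..r, B ρ * ρ) ^ 2 - c := by
  rw [integral_sub_const_mul_id hB]
  set Φ := ∫ ρ in (0 : ℝ)..r, B ρ * ρ
  calc 2 / r ^ 2 * (Φ - c * ((r ^ 2 - 0 ^ 2) / 2))
      = 2 * Φ / r ^ 2 - c := by field_simp; ring
    _ ≤ (m - Φ) ^ 2 / r ^ 2 - c := by
        gcongr
        exact two_mul_le_sub_sq (by linarith) Φ
    _ = (m / r - 1 / r * Φ) ^ 2 - c := by ring

theorem stmt_9_general {B : ℝ → ℝ} {r : ℝ} (hr : 0 < r) (hB : AntitoneOn B (Set.Icc 0 r))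
    {a : ℝ} (ha : a = (1 / r) * ∫ ρ in (0 : ℝ)..r, B ρ * ρ) {m : ℝ} (hm : m ≤ -1 / 2) :
    (m / r - a) ^ 2 - B r ≥ (2 / r ^ 2) * (∫ ρ in (0 : ℝ)..r, (B ρ - B r) * ρ) ∧
    (2 / r ^ 2) * (∫ ρ in (0 : ℝ)..r, (B ρ - B r) * ρ) ≥ 0 := by
  have hB_int : IntervalIntegrable B volume 0 r :=
    AntitoneOn.intervalIntegrable (by rwa [Set.uIcc_of_le hr.le])
  have hBρ_int : IntervalIntegrable (fun ρ => B ρ * ρ) volume 0 r :=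
    hB_int.mul_continuousOn continuousOn_id
  have excess_nonneg : 0 ≤ ∫ ρ in (0 : ℝ)..r, (B ρ - B r) * ρ :=
    integral_sub_right_mul_nonneg_of_antitoneOn hr.le hB fun _ hρ => hρ.1
  subst ha
  exact ⟨two_div_sq_mul_integral_le_sq_sub hr.ne' hBρ_int hm (B r),
    mul_nonneg (by positivity) excess_nonneg⟩

/-- Pointwise lower bound for the effective radial potential at negative
angular momentum `m < 0`:
`(m/r - a(r))² - B(r) ≥ (2/r²)∫_0^r (B(ρ) - B(r))ρ dρ ≥ 0`. -/
theorem stmt_9 (R : ℝ) (hR : 0 < R) (B : ℝ → ℝ)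
    (hBc : ContinuousOn B (Set.Icc 0 R))
    (hBnn : ∀ r ∈ Set.Icc (0:ℝ) R, 0 ≤ B r)
    (hBmono : ∀ r₁ ∈ Set.Icc (0:ℝ) R, ∀ r₂ ∈ Set.Icc (0:ℝ) R, r₁ ≤ r₂ → B r₂ ≤ B r₁)
    (a : ℝ → ℝ) (ha : ∀ r ∈ Set.Ioc (0:ℝ) R, a r = (1 / r) * ∫ ρ in (0:ℝ)..r, B ρ * ρ)
    (m : ℤ) (hm : m < 0) (r : ℝ) (hr : r ∈ Set.Ioc (0:ℝ) R) :
    ((m : ℝ) / r - a r) ^ 2 - B r ≥ (2 / r ^ 2) * (∫ ρ in (0:ℝ)..r, (B ρ - B r) * ρ) ∧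
    (2 / r ^ 2) * (∫ ρ in (0:ℝ)..r, (B ρ - B r) * ρ) ≥ 0 := by
  have hB : AntitoneOn B (Set.Icc 0 R) := fun x hx y hy => hBmono x hx y hy
  have hm_le : (m : ℝ) ≤ -1 := by exact_mod_cast Int.le_sub_one_of_lt hm
  exact stmt_9_general hr.1 (hB.mono (Set.Icc_subset_Icc_right hr.2)) (ha r hr) (by linarith)
end

section
/- Let σ : ℝ → ℝ be a continuous function with e^{iσ(t)} = (i − t)/(i + t) for all t ∈ ℝ, and let p : ℝ → ℂ be C¹ and 2π-periodic. Define Ψ(t) = p(σ(t)). Then Ψ is C¹, the function t ↦ conj(Ψ(t)) · (−i Ψ′(t)) is integrable on ℝ, and ∫_ℝ conj(Ψ(t)) (−i Ψ′(t)) dt = ∫_0^{2π} conj(p(s)) (−i p′(s)) ds. -/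
open MeasureTheory

/-!
The branch of `arg ((i - t) / (i + t))` that vanishes at `0` is `2 arctan t`, so every other branch
differs from it pointwise by a multiple of `2π`, which a `2π`-periodic `p` does not see. The form
`⟪Ψ, -i Ψ'⟫ dt` contains a single derivative, so it transforms like a one-form and its integral is
invariant under monotone reparametrization; `2 arctan` maps `ℝ` onto `(-π, π)`, a full period.
-/

section CayleyTransform

theorem exp_I_mul_two_mul_eq_div_tan {z : ℂ} (hz : Complex.cos z ≠ 0) :
    Complex.exp (Complex.I * (2 * z)) =
      (Complex.I - Complex.tan z) / (Complex.I + Complex.tan z) := by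
  have numerator : Complex.I - Complex.tan z =
      Complex.I / Complex.cos z * Complex.exp (z * Complex.I) := by
    rw [Complex.exp_mul_I, Complex.tan_eq_sin_div_cos]
    field_simp
    linear_combination -Complex.sin z * Complex.I_sq
  have denominator : Complex.I + Complex.tan z =
      Complex.I / Complex.cos z * Complex.exp (-z * Complex.I) := by
    rw [Complex.exp_mul_I, Complex.cos_neg, Complex.sin_neg, Complex.tan_eq_sin_div_cos]
    field_simp
    linear_combination Complex.sin z * Complex.I_sq
  rw [numerator, denominator, mul_div_mul_left _ _ (div_ne_zero Complex.I_ne_zero hz),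
    ← Complex.exp_sub]
  ring_nf

/-- The continuous branch of the argument of the Cayley transform `(i - t) / (i + t)` that takes
values in `(-π, π)`. -/
noncomputable def cayleyArg (t : ℝ) : ℝ := 2 * Real.arctan t

theorem exp_I_mul_cayleyArg (t : ℝ) :
    Complex.exp (Complex.I * (cayleyArg t : ℂ)) =
      (Complex.I - (t : ℂ)) / (Complex.I + (t : ℂ)) := by
  have cos_ne_zero : Complex.cos (Real.arctan t : ℂ) ≠ 0 := by
    exact_mod_cast (Real.cos_arctan_pos t).ne'
  have tan_eq : Complex.tan (Real.arctan t : ℂ) = t := by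
    rw [← Complex.ofReal_tan, Real.tan_arctan]
  simpa only [cayleyArg, Complex.ofReal_mul, Complex.ofReal_ofNat, tan_eq] using
    exp_I_mul_two_mul_eq_div_tan cos_ne_zero

theorem exists_int_eq_cayleyArg_add {t θ : ℝ}
    (hθ : Complex.exp (Complex.I * (θ : ℂ)) = (Complex.I - (t : ℂ)) / (Complex.I + (t : ℂ))) :
    ∃ n : ℤ, θ = cayleyArg t + n * (2 * Real.pi) := by
  obtain ⟨n, hn⟩ := Complex.exp_eq_exp_iff_exists_int.mp (hθ.trans (exp_I_mul_cayleyArg t).symm)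
  refine ⟨n, Complex.ofReal_injective (mul_left_cancel₀ Complex.I_ne_zero ?_)⟩
  rw [hn]
  push_cast
  ring

theorem monotone_cayleyArg : Monotone cayleyArg :=
  Real.arctan_mono.const_mul zero_le_two

theorem contDiff_cayleyArg {n : WithTop ℕ∞} : ContDiff ℝ n cayleyArg :=
  contDiff_const.mul Real.contDiff_arctan

theorem range_cayleyArg : Set.range cayleyArg = Set.Ioo (-Real.pi) Real.pi := by
  calc Set.range cayleyArg = (2 * ·) '' Set.range Real.arctan := Set.range_comp (2 * ·) Real.arctan
    _ = Set.Ioo (2 * -(Real.pi / 2)) (2 * (Real.pi / 2)) := by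
      rw [Real.range_arctan, Set.image_mul_left_Ioo two_pos]
    _ = Set.Ioo (-Real.pi) Real.pi := by ring_nf

end CayleyTransform

theorem periodic_deriv_of_periodic {𝕜 F : Type*} [NontriviallyNormedField 𝕜]
    [NormedAddCommGroup F] [NormedSpace 𝕜 F] {f : 𝕜 → F} {c : 𝕜} (hf : Function.Periodic f c) :
    Function.Periodic (deriv f) c := fun x => by
  rw [← deriv_comp_add_const, hf.funext]

theorem setIntegral_Ioo_neg_pi_pi_eq_of_periodic {F : Type*} [NormedAddCommGroup F]
    [NormedSpace ℝ F] {f : ℝ → F} (hf : Function.Periodic f (2 * Real.pi)) :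
    ∫ s in Set.Ioo (-Real.pi) Real.pi, f s = ∫ s in (0 : ℝ)..(2 * Real.pi), f s := by
  have shifted := hf.intervalIntegral_add_eq (-Real.pi) 0
  rw [show -Real.pi + 2 * Real.pi = Real.pi by ring, zero_add] at shifted
  rw [← integral_Ioc_eq_integral_Ioo, ← shifted,
    intervalIntegral.integral_of_le (neg_le_self Real.pi_nonneg)]

section Kinetic

variable {E : Type*} [NormedAddCommGroup E] [InnerProductSpace ℂ E] {p : ℝ → E} {φ : ℝ → ℝ}

/-- The density `⟪f, -i f'⟫` of the first-order (Dirac) kinetic form of a curve `f`, for an inner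
product that is conjugate-linear in its first argument. -/
noncomputable def kineticDensity (f : ℝ → E) (t : ℝ) : ℂ :=
  inner ℂ (f t) (-Complex.I • deriv f t)

theorem kineticDensity_eq_conj_mul (f : ℝ → ℂ) :
    kineticDensity f = fun t => (starRingEnd ℂ) (f t) * (-Complex.I * deriv f t) :=
  funext fun t => RCLike.inner_apply' (f t) (-Complex.I • deriv f t)

theorem kineticDensity_comp (hp : Differentiable ℝ p) (hφ : Differentiable ℝ φ) :
    kineticDensity (p ∘ φ) = fun t => deriv φ t • kineticDensity p (φ t) := by
  funext t
  rw [kineticDensity, deriv.scomp t (hp (φ t)) (hφ t), smul_comm, inner_smul_right_eq_smul,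
    kineticDensity, Function.comp_apply]

theorem continuous_kineticDensity (hp : ContDiff ℝ 1 p) : Continuous (kineticDensity p) :=
  hp.continuous.inner ((hp.continuous_deriv le_rfl).const_smul (-Complex.I))

theorem periodic_kineticDensity {c : ℝ} (hp : Function.Periodic p c) :
    Function.Periodic (kineticDensity p) c := fun s => by
  rw [kineticDensity, hp s, periodic_deriv_of_periodic hp s, kineticDensity]

theorem integrable_kineticDensity_comp_iff (hp : Differentiable ℝ p) (hφ : Differentiable ℝ φ)
    (hmono : Monotone φ) :
    Integrable (kineticDensity (p ∘ φ)) ↔ IntegrableOn (kineticDensity p) (Set.range φ) := by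
  rw [kineticDensity_comp hp hφ, ← integrableOn_univ, ← Set.image_univ]
  exact (integrableOn_image_iff_integrableOn_deriv_smul_of_monotoneOn MeasurableSet.univ
    (fun t _ => (hφ t).hasDerivAt.hasDerivWithinAt) (hmono.monotoneOn _) _).symm

theorem integral_kineticDensity_comp (hp : Differentiable ℝ p) (hφ : Differentiable ℝ φ)
    (hmono : Monotone φ) :
    ∫ t, kineticDensity (p ∘ φ) t = ∫ s in Set.range φ, kineticDensity p s := by
  rw [kineticDensity_comp hp hφ, ← setIntegral_univ, ← Set.image_univ]
  exact (integral_image_eq_integral_deriv_smul_of_monotoneOn MeasurableSet.univ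
    (fun t _ => (hφ t).hasDerivAt.hasDerivWithinAt) (hmono.monotoneOn _) _).symm

theorem stmt_16_general {σ : ℝ → ℝ}
    (hσ : ∀ t : ℝ, Complex.exp (Complex.I * (σ t : ℂ)) =
      (Complex.I - (t : ℂ)) / (Complex.I + (t : ℂ)))
    (hp : ContDiff ℝ 1 p) (hper : Function.Periodic p (2 * Real.pi)) :
    ContDiff ℝ 1 (p ∘ σ) ∧ Integrable (kineticDensity (p ∘ σ)) ∧
      ∫ t, kineticDensity (p ∘ σ) t = ∫ s in (0 : ℝ)..(2 * Real.pi), kineticDensity p s := by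
  have comp_eq : p ∘ σ = p ∘ cayleyArg := by
    funext t
    obtain ⟨n, hn⟩ := exists_int_eq_cayleyArg_add (hσ t)
    rw [Function.comp_apply, hn, hper.int_mul n, Function.comp_apply]
  have p_diff : Differentiable ℝ p := hp.differentiable one_ne_zero
  have arg_diff : Differentiable ℝ cayleyArg := contDiff_cayleyArg.differentiable one_ne_zero
  rw [comp_eq]
  refine ⟨hp.comp contDiff_cayleyArg, ?_, ?_⟩
  · rw [integrable_kineticDensity_comp_iff p_diff arg_diff monotone_cayleyArg, range_cayleyArg]
    exact (continuous_kineticDensity hp).integrableOn_Icc.mono_set Set.Ioo_subset_Icc_self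
  · rw [integral_kineticDensity_comp p_diff arg_diff monotone_cayleyArg, range_cayleyArg,
      setIntegral_Ioo_neg_pi_pi_eq_of_periodic (periodic_kineticDensity hper)]

end Kinetic

/-- Conformal invariance of the first-order (Dirac) kinetic form under the Cayley
transform: with `Ψ = p ∘ σ` where `e^{iσ(t)} = (i-t)/(i+t)`, the function `Ψ` is `C¹`,
`conj Ψ · (-iΨ′)` is integrable on `ℝ`, and its integral equals
`∫_0^{2π} conj(p) (-i p′)`. -/
theorem stmt_16 (σ : ℝ → ℝ) (hσc : Continuous σ)
    (hσ : ∀ t : ℝ, Complex.exp (Complex.I * (σ t : ℂ))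
      = (Complex.I - (t : ℂ)) / (Complex.I + (t : ℂ)))
    (p : ℝ → ℂ) (hp : ContDiff ℝ 1 p) (hpper : ∀ s, p (s + 2 * Real.pi) = p s) :
    ContDiff ℝ 1 (fun t : ℝ => p (σ t)) ∧
    Integrable (fun t : ℝ =>
      (starRingEnd ℂ) (p (σ t)) * (-Complex.I * deriv (fun t' : ℝ => p (σ t')) t)) ∧
    (∫ t : ℝ, (starRingEnd ℂ) (p (σ t)) * (-Complex.I * deriv (fun t' : ℝ => p (σ t')) t))
      = ∫ s in (0:ℝ)..(2 * Real.pi), (starRingEnd ℂ) (p s) * (-Complex.I * deriv p s) := by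
  simpa only [kineticDensity_eq_conj_mul, Function.comp_def] using
    stmt_16_general hσ hp hpper
end

section
/- Let V : ℝ → ℝ be continuous and 2π-periodic, set Φ_V = (1/(2π)) ∫_0^{2π} V(s) ds, and assume Φ_V < 0; let N = ⌈−Φ_V⌉. Then there exists an N-dimensional complex subspace M of the space of analytic trigonometric polynomials (finite sums f(s) = ∑_{n=0}^{K} a_n e^{ins} with a_n ∈ ℂ) such that every nonzero f ∈ M satisfies Re ∫_0^{2π} ( −i f′(s) + V(s) f(s) ) · conj(f(s)) ds < 0. -/
open MeasureTheory

/-!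
Suppose that no subspace of the span of `1, e^{is}, …, e^{i(m-1)s}`, for any `m`, has dimension at
least `N` and a negative definite form. Multiplication by `e^{ijs}` maps this span isometrically to
the span of `e^{ijs}, …, e^{i(j+m-1)s}` and raises the form of `-i d/ds + V` by `j‖f‖²`, so by the
Courant–Fischer principle the `k`-th smallest eigenvalue (counting from `0`) of every truncation is
at least `k + 1 - N` once `k + 1 ≥ N`. If `V ≥ -C`, the remaining eigenvalues are at least `-C`.
Comparing with the trace `∑ k + m Φ_V` of the `m`-th truncation gives `m (1 - N - Φ_V) ≤ N C` for
all `m`, hence `N ≥ 1 - Φ_V`, which fails for `N = ⌈-Φ_V⌉`. An unbounded `V` is first replaced by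
`max V (-c)`, which only increases the form and changes the mean arbitrarily little.
-/

section LinearAlgebra

variable {K E F : Type*} [Field K] [AddCommGroup E] [Module K E] [AddCommGroup F] [Module K F]

lemma finrank_map_of_injective {f : E →ₗ[K] F} (hf : Function.Injective f) (W : Submodule K E) :
    Module.finrank K (W.map f) = Module.finrank K W :=
  (W.equivMapOfInjective f hf).finrank_eq.symm

lemma exists_submodule_le_finrank_eq (W : Submodule K E) {n : ℕ} (hn : n ≤ Module.finrank K W) :
    ∃ W' ≤ W, Module.finrank K W' = n := by
  obtain ⟨b, hb⟩ := exists_linearIndependent_of_le_finrank hn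
  refine ⟨(Submodule.span K (Set.range b)).map W.subtype, Submodule.map_subtype_le _ _, ?_⟩
  rw [finrank_map_of_injective W.injective_subtype, finrank_span_eq_card hb, Fintype.card_fin]

lemma finrank_add_finrank_le_finrank_comap_add_finrank [FiniteDimensional K E]
    [FiniteDimensional K F] (f : E →ₗ[K] F) (W : Submodule K F) :
    Module.finrank K W + Module.finrank K E ≤
      Module.finrank K (W.comap f) + Module.finrank K F := by
  have hker : LinearMap.ker (W.mkQ ∘ₗ f) = W.comap f := by rw [LinearMap.ker_comp, W.ker_mkQ]
  have hrank := (W.mkQ ∘ₗ f).finrank_range_add_finrank_ker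
  have hrange := Submodule.finrank_le (LinearMap.range (W.mkQ ∘ₗ f))
  have hquot := W.finrank_quotient_add_finrank
  rw [hker] at hrank
  lia

end LinearAlgebra

section CourantFischer

variable {𝕜 E : Type*} [RCLike 𝕜] [NormedAddCommGroup E] [InnerProductSpace 𝕜 E]
  [FiniteDimensional 𝕜 E] {T : E →ₗ[𝕜] E} {m : ℕ}

lemma re_inner_apply_self_eq_sum_eigenvalues (hT : T.IsSymmetric) (hm : Module.finrank 𝕜 E = m)
    (x : E) :
    RCLike.re (inner 𝕜 x (T x)) =
      ∑ i, hT.eigenvalues hm i * ‖(hT.eigenvectorBasis hm).repr x i‖ ^ 2 := by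
  rw [← (hT.eigenvectorBasis hm).repr.inner_map_map, PiLp.inner_apply, map_sum]
  refine Finset.sum_congr rfl fun i _ => ?_
  rw [hT.eigenvectorBasis_apply_self_apply hm, RCLike.inner_apply, mul_assoc, RCLike.mul_conj]
  norm_cast

lemma exists_finrank_eq_forall_re_inner_lt_of_eigenvalues_rev_lt (hT : T.IsSymmetric)
    (hm : Module.finrank 𝕜 E = m) {c : ℝ} {k : Fin m} (hk : hT.eigenvalues hm k.rev < c) :
    ∃ W : Submodule 𝕜 E, Module.finrank 𝕜 W = k + 1 ∧
      ∀ x ∈ W, x ≠ 0 → RCLike.re (inner 𝕜 x (T x)) < c * ‖x‖ ^ 2 := by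
  set b := hT.eigenvectorBasis hm with hb
  have hlt {i : Fin m} (hi : k.rev ≤ i) : hT.eigenvalues hm i < c :=
    (hT.eigenvalues_antitone hm hi).trans_lt hk
  refine ⟨Submodule.span 𝕜 (b.toBasis '' Set.Ici k.rev), ?_, fun x hx hx0 => ?_⟩
  · have hli := b.toBasis.linearIndependent.comp (Subtype.val : Set.Ici k.rev → Fin m)
      Subtype.val_injective
    rw [Set.image_eq_range]
    refine (finrank_span_eq_card hli).trans ?_
    rw [← Set.toFinset_card, Set.toFinset_Ici, Fin.card_Ici, Fin.val_rev]
    lia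
  have hsupp {i : Fin m} (hi : b.repr x i ≠ 0) : k.rev ≤ i :=
    b.toBasis.mem_span_image.1 hx (by simpa using hi)
  obtain ⟨i₀, hi₀⟩ : ∃ i, b.repr x i ≠ 0 := by
    by_contra! hzero
    exact hx0 (b.repr.map_eq_zero_iff.1 (PiLp.ext hzero))
  rw [re_inner_apply_self_eq_sum_eigenvalues hT hm, ← b.repr.norm_map x,
    EuclideanSpace.norm_sq_eq, Finset.mul_sum]
  refine Finset.sum_lt_sum (fun i _ => ?_) ⟨i₀, Finset.mem_univ _, ?_⟩
  · rcases eq_or_ne (b.repr x i) 0 with hi | hi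
    · simp [← hb, hi]
    · exact mul_le_mul_of_nonneg_right (hlt (hsupp hi)).le (by positivity)
  · exact mul_lt_mul_of_pos_right (hlt (hsupp hi₀)) (by positivity)

lemma le_eigenvalues_rev (hT : T.IsSymmetric) (hm : Module.finrank 𝕜 E = m) {c : ℝ} {k : Fin m}
    (hc : ∀ W : Submodule 𝕜 E, Module.finrank 𝕜 W = k + 1 →
      ∃ x ∈ W, x ≠ 0 ∧ c * ‖x‖ ^ 2 ≤ RCLike.re (inner 𝕜 x (T x))) :
    c ≤ hT.eigenvalues hm k.rev := by
  by_contra! hlt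
  obtain ⟨W, hW, hneg⟩ := exists_finrank_eq_forall_re_inner_lt_of_eigenvalues_rev_lt hT hm hlt
  obtain ⟨x, hxW, hx0, hx⟩ := hc W hW
  exact (hneg x hxW hx0).not_ge hx

end CourantFischer

section ZeroExtension

variable {𝕜 ι κ : Type*} [RCLike 𝕜] [Fintype ι] [Fintype κ]

/-- Extension by zero along an embedding of index types, as a linear isometry of Euclidean spaces.
For `Fin.natAddEmb j` it is multiplication by `e^{ijs}` in terms of Fourier coefficients. -/
noncomputable def zeroExtension (e : ι ↪ κ) : EuclideanSpace 𝕜 ι →ₗᵢ[𝕜] EuclideanSpace 𝕜 κ where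
  toLinearMap := (WithLp.linearEquiv 2 𝕜 (κ → 𝕜)).symm.toLinearMap ∘ₗ
    Function.ExtendByZero.linearMap 𝕜 e ∘ₗ (WithLp.linearEquiv 2 𝕜 (ι → 𝕜)).toLinearMap
  norm_map' x := by
    rw [← sq_eq_sq₀ (norm_nonneg _) (norm_nonneg _), EuclideanSpace.norm_sq_eq,
      EuclideanSpace.norm_sq_eq]
    refine (Fintype.sum_of_injective e e.injective _ _ (fun i hi => ?_) fun i => ?_).symm
    · simp [Function.extend_apply' _ _ _ hi]
    · simp [e.injective.extend_apply]

lemma zeroExtension_apply (e : ι ↪ κ) (x : EuclideanSpace 𝕜 ι) (i : ι) :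
    zeroExtension e x (e i) = x i :=
  e.injective.extend_apply _ _ _

lemma zeroExtension_apply_of_notMem_range (e : ι ↪ κ) (x : EuclideanSpace 𝕜 ι) {i : κ}
    (hi : i ∉ Set.range e) : zeroExtension e x i = 0 :=
  Function.extend_apply' _ _ _ hi

lemma inner_zeroExtension_toEuclideanLin [DecidableEq ι] [DecidableEq κ] (A : Matrix κ κ 𝕜)
    (e : ι ↪ κ) (x y : EuclideanSpace 𝕜 ι) :
    inner 𝕜 (zeroExtension e x) (A.toEuclideanLin (zeroExtension e y)) =
      inner 𝕜 x ((A.submatrix e e).toEuclideanLin y) := by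
  simp only [PiLp.inner_apply, Matrix.toLpLin_apply]
  refine (Fintype.sum_of_injective e e.injective _ _ (fun i hi => ?_) fun i => ?_).symm
  · simp [zeroExtension_apply_of_notMem_range e x hi]
  · rw [zeroExtension_apply]
    congr 1
    refine Fintype.sum_of_injective e e.injective _ _ (fun k hk => ?_) fun k => ?_
    · simp [zeroExtension_apply_of_notMem_range e y hk]
    · simp [zeroExtension_apply]

end ZeroExtension

section DiracMatrix

/-- The `m × m` Toeplitz matrix with symbol coefficients `v`: its `(j, k)` entry is `v (j - k)`. -/
def toeplitzMatrix {R : Type*} (v : ℤ → R) (m : ℕ) : Matrix (Fin m) (Fin m) R :=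
  Matrix.of fun j k => v ((j : ℕ) - (k : ℕ))

lemma isHermitian_toeplitzMatrix {R : Type*} [Star R] {v : ℤ → R} (hv : ∀ n, star (v n) = v (-n))
    (m : ℕ) : (toeplitzMatrix v m).IsHermitian := by
  ext j k
  simp [toeplitzMatrix, hv]

variable {𝕜 : Type*} [RCLike 𝕜] {v : ℤ → 𝕜} {N : ℕ}

/-- The matrix of the compression of `-i d/ds + V` to the span of `1, e^{is}, …, e^{i(m-1)s}`, where
`v` is the sequence of Fourier coefficients of `V`. -/
def diracMatrix (v : ℤ → 𝕜) (m : ℕ) : Matrix (Fin m) (Fin m) 𝕜 :=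
  Matrix.diagonal (fun k : Fin m => ((k : ℕ) : 𝕜)) + toeplitzMatrix v m

/-- The quadratic form of `-i d/ds + V`, normalized by `1/(2π)`, in terms of the coefficients `x` of
an analytic trigonometric polynomial. -/
noncomputable def diracForm (v : ℤ → 𝕜) {m : ℕ} (x : EuclideanSpace 𝕜 (Fin m)) : ℝ :=
  RCLike.re (inner 𝕜 x ((diracMatrix v m).toEuclideanLin x))

lemma isSymmetric_diracMatrix (hv : ∀ n, star (v n) = v (-n)) (m : ℕ) :
    (diracMatrix v m).toEuclideanLin.IsSymmetric :=
  Matrix.isSymmetric_toEuclideanLin_iff.2 <|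
    (Matrix.isHermitian_diagonal_of_self_adjoint _ (by ext; simp)).add
      (isHermitian_toeplitzMatrix hv m)

lemma trace_diracMatrix (v : ℤ → 𝕜) (m : ℕ) :
    (diracMatrix v m).trace = ∑ k : Fin m, (((k : ℕ) : 𝕜) + v 0) := by
  simp [Matrix.trace, diracMatrix, toeplitzMatrix]

lemma sum_eigenvalues_rev_diracMatrix (hv : ∀ n, star (v n) = v (-n)) (m : ℕ) :
    ∑ k : Fin m, (isSymmetric_diracMatrix hv m).eigenvalues finrank_euclideanSpace_fin k.rev =
      ∑ k : Fin m, ((k : ℕ) : ℝ) + m * RCLike.re (v 0) := by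
  refine (Equiv.sum_comp Fin.revPerm
    ((isSymmetric_diracMatrix hv m).eigenvalues finrank_euclideanSpace_fin)).trans ?_
  rw [← (isSymmetric_diracMatrix hv m).re_trace_eq_sum_eigenvalues,
    Matrix.toEuclideanLin_eq_toLin_orthonormal, Matrix.trace_toLin_eq, trace_diracMatrix]
  simp [Finset.sum_add_distrib]

lemma submatrix_natAdd_diracMatrix (v : ℤ → 𝕜) (j m : ℕ) :
    (diracMatrix v (j + m)).submatrix (Fin.natAddEmb j) (Fin.natAddEmb j) =
      diracMatrix v m + (j : 𝕜) • 1 := by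
  ext a b
  rcases eq_or_ne a b with rfl | hab
  · simp only [diracMatrix, toeplitzMatrix, Matrix.submatrix_apply, Matrix.add_apply,
      Matrix.diagonal_apply_eq, Matrix.of_apply, Matrix.smul_apply, Matrix.one_apply_eq,
      Fin.natAddEmb_apply, Fin.val_natAdd, sub_self, smul_eq_mul]
    push_cast
    ring
  · simp [diracMatrix, toeplitzMatrix, hab]

lemma diracForm_zeroExtension_natAdd (v : ℤ → 𝕜) (j : ℕ) {m : ℕ} (x : EuclideanSpace 𝕜 (Fin m)) :
    diracForm v (zeroExtension (Fin.natAddEmb j) x) = diracForm v x + j * ‖x‖ ^ 2 := by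
  rw [diracForm, inner_zeroExtension_toEuclideanLin, submatrix_natAdd_diracMatrix]
  simp only [map_add, map_smul, Matrix.toLpLin_one, LinearMap.add_apply, LinearMap.smul_apply,
    LinearMap.id_apply, inner_add_right, inner_smul_right, inner_self_eq_norm_sq_to_K, diracForm]
  norm_cast

lemma sub_le_eigenvalues_rev_diracMatrix (hv : ∀ n, star (v n) = v (-n))
    (hN : ∀ (m : ℕ) (W : Submodule 𝕜 (EuclideanSpace 𝕜 (Fin m))), N ≤ Module.finrank 𝕜 W →
      ∃ x ∈ W, x ≠ 0 ∧ 0 ≤ diracForm v x)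
    {m : ℕ} {k : Fin m} (hk : N ≤ k + 1) :
    ((k : ℕ) : ℝ) + 1 - N ≤
      (isSymmetric_diracMatrix hv m).eigenvalues finrank_euclideanSpace_fin k.rev := by
  refine le_eigenvalues_rev _ _ fun W hW => ?_
  obtain ⟨j, hj⟩ := Nat.exists_eq_add_of_le hk
  obtain ⟨m, rfl⟩ := Nat.exists_eq_add_of_le (show j ≤ m by lia)
  let shift : EuclideanSpace 𝕜 (Fin m) →ₗᵢ[𝕜] EuclideanSpace 𝕜 (Fin (j + m)) :=
    zeroExtension (Fin.natAddEmb j)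
  have hcomap : N ≤ Module.finrank 𝕜 (W.comap shift.toLinearMap) := by
    have hle := finrank_add_finrank_le_finrank_comap_add_finrank shift.toLinearMap W
    rw [finrank_euclideanSpace_fin, finrank_euclideanSpace_fin, hW] at hle
    omega
  obtain ⟨x, hxW, hx0, hx⟩ := hN m _ hcomap
  refine ⟨shift x, hxW, (map_ne_zero_iff shift shift.injective).2 hx0, ?_⟩
  have hkj : ((k : ℕ) : ℝ) + 1 - N = j := sub_eq_iff_eq_add'.2 (mod_cast hj)
  calc (((k : ℕ) : ℝ) + 1 - N) * ‖shift x‖ ^ 2 = j * ‖x‖ ^ 2 := by rw [hkj, shift.norm_map]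
    _ ≤ diracForm v x + j * ‖x‖ ^ 2 := le_add_of_nonneg_left hx
    _ = diracForm v (shift x) := (diracForm_zeroExtension_natAdd v j x).symm

lemma le_eigenvalues_rev_diracMatrix (hv : ∀ n, star (v n) = v (-n)) {c : ℝ} {m : ℕ}
    (hc : ∀ x : EuclideanSpace 𝕜 (Fin m), c * ‖x‖ ^ 2 ≤ diracForm v x) (k : Fin m) :
    c ≤ (isSymmetric_diracMatrix hv m).eigenvalues finrank_euclideanSpace_fin k.rev := by
  refine le_eigenvalues_rev _ _ fun W hW => ?_
  have hW0 : W ≠ ⊥ := by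
    rintro rfl
    simp at hW
  obtain ⟨x, hxW, hx0⟩ := W.exists_mem_ne_zero_of_ne_bot hW0
  exact ⟨x, hxW, hx0, hc x⟩

lemma mul_one_sub_sub_re_le (hv : ∀ n, star (v n) = v (-n)) {C : ℝ} (hC0 : 0 ≤ C)
    (hC : ∀ (m : ℕ) (x : EuclideanSpace 𝕜 (Fin m)), -C * ‖x‖ ^ 2 ≤ diracForm v x)
    (hN : ∀ (m : ℕ) (W : Submodule 𝕜 (EuclideanSpace 𝕜 (Fin m))), N ≤ Module.finrank 𝕜 W →
      ∃ x ∈ W, x ≠ 0 ∧ 0 ≤ diracForm v x) (m : ℕ) :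
    m * (1 - N - RCLike.re (v 0)) ≤ N * C := by
  have hpointwise (k : Fin m) : ((k : ℕ) : ℝ) + (1 - N) - (if (k : ℕ) < N then C else 0) ≤
      (isSymmetric_diracMatrix hv m).eigenvalues finrank_euclideanSpace_fin k.rev := by
    split_ifs with hk
    · have hkN : ((k : ℕ) : ℝ) + 1 ≤ N := mod_cast hk
      linarith [le_eigenvalues_rev_diracMatrix hv (hC m) k]
    · linarith [sub_le_eigenvalues_rev_diracMatrix hv hN (k := k) (by lia)]
  have hcount : ∑ k : Fin m, (if (k : ℕ) < N then C else 0) ≤ N * C := by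
    rw [Fin.sum_univ_eq_sum_range (fun k => if k < N then C else 0), ← Finset.sum_filter,
      Finset.sum_const, nsmul_eq_mul]
    have hcard : ((Finset.range m).filter (· < N)).card ≤ N := by
      simpa using Finset.card_le_card (t := Finset.range N) fun k hk => by simp_all
    gcongr
  have hsum := Finset.sum_le_sum fun k (_ : k ∈ Finset.univ) => hpointwise k
  rw [sum_eigenvalues_rev_diracMatrix hv, Finset.sum_sub_distrib, Finset.sum_add_distrib,
    Finset.sum_const, Finset.card_fin, nsmul_eq_mul] at hsum
  linarith

lemma exists_le_finrank_forall_diracForm_neg (hv : ∀ n, star (v n) = v (-n)) {C : ℝ}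
    (hC0 : 0 ≤ C) (hC : ∀ (m : ℕ) (x : EuclideanSpace 𝕜 (Fin m)), -C * ‖x‖ ^ 2 ≤ diracForm v x)
    (hN : N < 1 - RCLike.re (v 0)) :
    ∃ (m : ℕ) (W : Submodule 𝕜 (EuclideanSpace 𝕜 (Fin m))), N ≤ Module.finrank 𝕜 W ∧
      ∀ x ∈ W, x ≠ 0 → diracForm v x < 0 := by
  by_contra! hnonneg
  obtain ⟨m, hm⟩ := exists_lt_nsmul (show 0 < 1 - N - RCLike.re (v 0) by linarith) (N * C)
  rw [nsmul_eq_mul] at hm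
  exact hm.not_ge (mul_one_sub_sub_re_le hv hC0 hC hnonneg m)

end DiracMatrix

section IntervalIntegral

variable {μ : Measure ℝ} {a b : ℝ} {f : ℝ → ℝ}

lemma intervalIntegrable_ofReal (hf : IntervalIntegrable f μ a b) :
    IntervalIntegrable (fun s => (f s : ℂ)) μ a b :=
  ⟨hf.1.ofReal, hf.2.ofReal⟩

lemma tendsto_intervalIntegral_max_neg (hf : IntervalIntegrable f μ a b) :
    Filter.Tendsto (fun c : ℕ => ∫ s in a..b, max (f s) (-c) ∂μ) Filter.atTop
      (nhds (∫ s in a..b, f s ∂μ)) := by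
  refine intervalIntegral.tendsto_integral_filter_of_dominated_convergence (fun s => |f s|)
    (.of_forall fun c => ?_) (.of_forall fun c => .of_forall fun s _ => ?_) hf.abs
    (.of_forall fun s _ => ?_)
  · exact hf.aestronglyMeasurable_restrict_uIoc.sup aestronglyMeasurable_const
  · have hc : (0 : ℝ) ≤ c := c.cast_nonneg
    exact abs_le.2 ⟨(neg_abs_le _).trans (le_max_left _ _),
      max_le (le_abs_self _) ((neg_nonpos.2 hc).trans (abs_nonneg _))⟩
  · refine tendsto_const_nhds.congr' ?_
    filter_upwards [tendsto_natCast_atTop_atTop.eventually_ge_atTop (-f s)] with c hc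
    exact (max_eq_left (neg_le.1 hc)).symm

end IntervalIntegral

section Fourier

open Complex ComplexConjugate ComplexOrder

lemma star_fourierCoeffOn_ofReal {a b : ℝ} (hab : a < b) (V : ℝ → ℝ) (n : ℤ) :
    star (fourierCoeffOn hab (fun s => (V s : ℂ)) n) =
      fourierCoeffOn hab (fun s => (V s : ℂ)) (-n) := by
  simp only [fourierCoeffOn_eq_integral, star_smul, star_trivial, RCLike.star_def,
    ← intervalIntegral.intervalIntegral_conj, smul_eq_mul, map_mul, conj_ofReal, ← fourier_neg]

lemma re_fourierCoeffOn_ofReal_zero {a b : ℝ} (hab : a < b) (V : ℝ → ℝ) :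
    (fourierCoeffOn hab (fun s => (V s : ℂ)) 0).re = 1 / (b - a) * ∫ s in a..b, V s := by
  simp only [fourierCoeffOn_eq_integral, neg_zero, fourier_zero, one_smul,
    intervalIntegral.integral_ofReal, real_smul, re_ofReal_mul, ofReal_re]

lemma fourierCoeffOn_const {a b : ℝ} (hab : a < b) (c : ℂ) (n : ℤ) :
    fourierCoeffOn hab (fun _ => c) n = if n = 0 then c else 0 := by
  have := Fact.mk (sub_pos.2 hab)
  have hlift : AddCircle.liftIoc (b - a) a (fun _ => (1 : ℂ)) = fourier 0 := by
    ext
    simp [AddCircle.liftIoc]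
  have hone : fourierCoeffOn hab (fun _ => (1 : ℂ)) n = Pi.single (M := fun _ => ℂ) 0 1 n := by
    rw [fourierCoeffOn, hlift, fourierCoeff_fourier]
  simpa [hone, Pi.single_apply] using fourierCoeffOn.const_mul (fun _ => 1) c n hab

lemma toeplitzMatrix_fourierCoeffOn_const {a b : ℝ} (hab : a < b) (c : ℂ) (m : ℕ) :
    toeplitzMatrix (fourierCoeffOn hab fun _ => c) m = c • 1 := by
  ext j k
  simp [toeplitzMatrix, fourierCoeffOn_const, Matrix.one_apply, sub_eq_zero, Fin.ext_iff]

lemma integral_mul_exp_mul_conj_exp (u : ℝ → ℂ) (j k : ℕ) :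
    ∫ s in (0 : ℝ)..(2 * Real.pi), u s * (exp (I * k * s) * conj (exp (I * j * s))) =
      2 * Real.pi * fourierCoeffOn Real.two_pi_pos u (j - k) := by
  have hexp (s : ℝ) : fourier (-(j - k : ℤ)) (s : AddCircle (2 * Real.pi - 0)) =
      exp (I * k * s) * conj (exp (I * j * s)) := by
    rw [fourier_coe_apply, ← exp_conj, ← exp_add]
    congr 1
    simp only [map_mul, conj_I, map_natCast, conj_ofReal]
    push_cast
    field_simp
    ring
  simp only [fourierCoeffOn_eq_integral, hexp, smul_eq_mul, mul_comm (u _), real_smul, sub_zero]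
  push_cast
  rw [← mul_assoc, mul_one_div_cancel (by simp), one_mul]

/-- The analytic trigonometric polynomial `∑ x k e^{iks}` with coefficients `x`, as a linear map of
`x`. -/
noncomputable def analyticTrigPoly (m : ℕ) : EuclideanSpace ℂ (Fin m) →ₗ[ℂ] ℝ → ℂ :=
  Fintype.linearCombination ℂ (fun (k : Fin m) (s : ℝ) => exp (I * (k : ℕ) * s)) ∘ₗ
    (WithLp.linearEquiv 2 ℂ (Fin m → ℂ)).toLinearMap

variable {m : ℕ} (x y : EuclideanSpace ℂ (Fin m))

lemma analyticTrigPoly_apply (s : ℝ) :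
    analyticTrigPoly m x s = ∑ k : Fin m, x k * exp (I * (k : ℕ) * s) := by
  simp [analyticTrigPoly, Fintype.linearCombination_apply]

lemma exists_analyticTrigPoly_eq_sum_range :
    ∃ (K : ℕ) (a : ℕ → ℂ), ∀ s : ℝ,
      analyticTrigPoly m x s = ∑ n ∈ Finset.range (K + 1), a n * exp (I * n * s) := by
  refine ⟨m, fun k => if h : k < m then x ⟨k, h⟩ else 0, fun s => ?_⟩
  rw [Finset.sum_range_succ, Finset.sum_range, analyticTrigPoly_apply]
  simp

lemma continuous_analyticTrigPoly : Continuous (analyticTrigPoly m x) := by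
  simp only [funext (analyticTrigPoly_apply x)]
  fun_prop

lemma neg_I_mul_deriv_analyticTrigPoly (s : ℝ) :
    -I * deriv (analyticTrigPoly m x) s = analyticTrigPoly m
      ((Matrix.diagonal fun k : Fin m => ((k : ℕ) : ℂ)).toEuclideanLin x) s := by
  have hexp (k : Fin m) : HasDerivAt (fun t : ℝ => x k * exp (I * (k : ℕ) * t))
      (x k * (exp (I * (k : ℕ) * s) * (I * (k : ℕ)))) s := by
    simpa using (((hasDerivAt_id s).ofReal_comp.const_mul (I * (k : ℕ))).cexp).const_mul (x k)
  rw [funext (analyticTrigPoly_apply x),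
    (HasDerivAt.fun_sum fun k (_ : k ∈ Finset.univ) => hexp k).deriv, analyticTrigPoly_apply,
    Finset.mul_sum]
  refine Finset.sum_congr rfl fun k _ => ?_
  simp only [Matrix.toLpLin_apply, Matrix.mulVec_diagonal]
  linear_combination (-(x k) * (k : ℕ) * exp (I * (k : ℕ) * s)) * I_mul_I

lemma integral_mul_analyticTrigPoly_mul_conj {u : ℝ → ℂ}
    (hu : IntervalIntegrable u volume 0 (2 * Real.pi)) :
    ∫ s in (0 : ℝ)..(2 * Real.pi),
      u s * (analyticTrigPoly m y s * conj (analyticTrigPoly m x s)) =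
      2 * Real.pi * inner ℂ x
        ((toeplitzMatrix (fourierCoeffOn Real.two_pi_pos u) m).toEuclideanLin y) := by
  have hexpand (s : ℝ) : u s * (analyticTrigPoly m y s * conj (analyticTrigPoly m x s)) =
      ∑ j : Fin m, ∑ k : Fin m, conj (x j) * y k *
        (u s * (exp (I * (k : ℕ) * s) * conj (exp (I * (j : ℕ) * s)))) := by
    rw [analyticTrigPoly_apply, analyticTrigPoly_apply, map_sum, Finset.sum_mul_sum,
      Finset.sum_comm, Finset.mul_sum]
    refine Finset.sum_congr rfl fun j _ => ?_
    rw [Finset.mul_sum]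
    refine Finset.sum_congr rfl fun k _ => ?_
    rw [map_mul]
    ring
  have hint (j k : Fin m) : IntervalIntegrable (fun s : ℝ => conj (x j) * y k *
      (u s * (exp (I * (k : ℕ) * s) * conj (exp (I * (j : ℕ) * s))))) volume 0 (2 * Real.pi) :=
    (hu.mul_continuousOn (by fun_prop)).const_mul _
  have hintsum (j : Fin m) : IntervalIntegrable (fun s : ℝ => ∑ k : Fin m, conj (x j) * y k *
      (u s * (exp (I * (k : ℕ) * s) * conj (exp (I * (j : ℕ) * s))))) volume 0 (2 * Real.pi) := by
    simpa only [Finset.sum_fn] using IntervalIntegrable.sum _ fun k _ => hint j k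
  simp only [hexpand]
  rw [intervalIntegral.integral_finsetSum fun j _ => hintsum j, PiLp.inner_apply,
    Finset.mul_sum]
  refine Finset.sum_congr rfl fun j _ => ?_
  rw [intervalIntegral.integral_finsetSum fun k _ => hint j k]
  simp only [intervalIntegral.integral_const_mul, integral_mul_exp_mul_conj_exp, RCLike.inner_apply,
    Matrix.toLpLin_apply, Matrix.mulVec, dotProduct, toeplitzMatrix, Matrix.of_apply,
    Finset.mul_sum, Finset.sum_mul]
  exact Finset.sum_congr rfl fun k _ => by ring

lemma integral_analyticTrigPoly_mul_conj :
    ∫ s in (0 : ℝ)..(2 * Real.pi), analyticTrigPoly m y s * conj (analyticTrigPoly m x s) =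
      2 * Real.pi * inner ℂ x y := by
  simpa [toeplitzMatrix_fourierCoeffOn_const] using
    integral_mul_analyticTrigPoly_mul_conj x y (u := fun _ => 1) intervalIntegrable_const

lemma injective_analyticTrigPoly (m : ℕ) : Function.Injective (analyticTrigPoly m) := by
  refine (injective_iff_map_eq_zero _).2 fun x hx => ?_
  simpa [hx, Real.pi_ne_zero] using integral_analyticTrigPoly_mul_conj x x

variable {U V : ℝ → ℝ}

lemma re_inner_toeplitzMatrix_mono (hU : IntervalIntegrable U volume 0 (2 * Real.pi))
    (hV : IntervalIntegrable V volume 0 (2 * Real.pi)) (hUV : U ≤ V) :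
    (inner ℂ x ((toeplitzMatrix
      (fourierCoeffOn Real.two_pi_pos fun s => (U s : ℂ)) m).toEuclideanLin x)).re ≤
    (inner ℂ x ((toeplitzMatrix
      (fourierCoeffOn Real.two_pi_pos fun s => (V s : ℂ)) m).toEuclideanLin x)).re := by
  have hform {u : ℝ → ℝ} (hu : IntervalIntegrable u volume 0 (2 * Real.pi)) :
      ∫ s in (0 : ℝ)..(2 * Real.pi), u s * ‖analyticTrigPoly m x s‖ ^ 2 =
        2 * Real.pi * (inner ℂ x ((toeplitzMatrix
          (fourierCoeffOn Real.two_pi_pos fun s => (u s : ℂ)) m).toEuclideanLin x)).re := by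
    have h := congrArg re
      (integral_mul_analyticTrigPoly_mul_conj x x (intervalIntegrable_ofReal hu))
    simp only [mul_conj'] at h
    norm_cast at h
    rwa [intervalIntegral.integral_ofReal, ofReal_re, re_ofReal_mul] at h
  have hint {u : ℝ → ℝ} (hu : IntervalIntegrable u volume 0 (2 * Real.pi)) :
      IntervalIntegrable (fun s => u s * ‖analyticTrigPoly m x s‖ ^ 2) volume 0 (2 * Real.pi) :=
    hu.mul_continuousOn ((continuous_analyticTrigPoly x).norm.pow 2).continuousOn
  refine le_of_mul_le_mul_left ?_ Real.two_pi_pos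
  rw [← hform hU, ← hform hV]
  exact intervalIntegral.integral_mono Real.two_pi_pos.le (hint hU) (hint hV) fun s =>
    mul_le_mul_of_nonneg_right (hUV s) (by positivity)

lemma diracForm_mono (hU : IntervalIntegrable U volume 0 (2 * Real.pi))
    (hV : IntervalIntegrable V volume 0 (2 * Real.pi)) (hUV : U ≤ V) :
    diracForm (fourierCoeffOn Real.two_pi_pos fun s => (U s : ℂ)) x ≤
      diracForm (fourierCoeffOn Real.two_pi_pos fun s => (V s : ℂ)) x := by
  simp only [diracForm, diracMatrix, map_add, LinearMap.add_apply, inner_add_right]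
  exact add_le_add le_rfl (re_inner_toeplitzMatrix_mono x hU hV hUV)

lemma mul_norm_sq_le_diracForm {c : ℝ} (hV : IntervalIntegrable V volume 0 (2 * Real.pi))
    (hc : ∀ s, c ≤ V s) :
    c * ‖x‖ ^ 2 ≤ diracForm (fourierCoeffOn Real.two_pi_pos fun s => (V s : ℂ)) x := by
  refine le_trans ?_ (diracForm_mono x intervalIntegrable_const hV hc)
  rw [diracForm, diracMatrix, toeplitzMatrix_fourierCoeffOn_const]
  simp only [map_add, map_smul, Matrix.toLpLin_one, LinearMap.add_apply, LinearMap.smul_apply,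
    LinearMap.id_apply, inner_add_right, inner_smul_right, inner_self_eq_norm_sq_to_K]
  have hdiag := (Matrix.isPositive_toEuclideanLin_iff.2 (Matrix.PosSemidef.diagonal
    fun k : Fin m => Nat.cast_nonneg (α := ℂ) k)).re_inner_nonneg_right x
  refine (le_add_of_nonneg_left hdiag).trans_eq ?_
  simp [← ofReal_pow]

lemma integral_dirac_analyticTrigPoly_mul_conj
    (hV : IntervalIntegrable V volume 0 (2 * Real.pi)) :
    ∫ s in (0 : ℝ)..(2 * Real.pi), (-I * deriv (analyticTrigPoly m x) s +
      V s * analyticTrigPoly m x s) * conj (analyticTrigPoly m x s) =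
      2 * Real.pi * inner ℂ x ((diracMatrix (fourierCoeffOn Real.two_pi_pos
        fun s => (V s : ℂ)) m).toEuclideanLin x) := by
  have hVint : IntervalIntegrable (fun s => (V s : ℂ) *
      (analyticTrigPoly m x s * conj (analyticTrigPoly m x s))) volume 0 (2 * Real.pi) :=
    (intervalIntegrable_ofReal hV).mul_continuousOn ((continuous_analyticTrigPoly x).mul
      (continuous_conj.comp (continuous_analyticTrigPoly x))).continuousOn
  have hint (y : EuclideanSpace ℂ (Fin m)) : IntervalIntegrable (fun s =>
      analyticTrigPoly m y s * conj (analyticTrigPoly m x s)) volume 0 (2 * Real.pi) :=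
    ((continuous_analyticTrigPoly y).mul
      (continuous_conj.comp (continuous_analyticTrigPoly x))).intervalIntegrable _ _
  simp only [neg_I_mul_deriv_analyticTrigPoly, add_mul, mul_assoc (V _ : ℂ)]
  rw [intervalIntegral.integral_add (hint _) hVint, integral_analyticTrigPoly_mul_conj,
    integral_mul_analyticTrigPoly_mul_conj x x (intervalIntegrable_ofReal hV), diracMatrix, map_add,
    LinearMap.add_apply, inner_add_right, mul_add]

end Fourier

lemma exists_le_finrank_forall_diracForm_fourierCoeffOn_neg {V : ℝ → ℝ}
    (hV : IntervalIntegrable V volume 0 (2 * Real.pi)) {N : ℕ}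
    (hN : N < 1 - 1 / (2 * Real.pi) * ∫ s in (0 : ℝ)..(2 * Real.pi), V s) :
    ∃ (m : ℕ) (W : Submodule ℂ (EuclideanSpace ℂ (Fin m))), N ≤ Module.finrank ℂ W ∧
      ∀ x ∈ W, x ≠ 0 →
        diracForm (fourierCoeffOn Real.two_pi_pos fun s => (V s : ℂ)) x < 0 := by
  have hmean := ((tendsto_intervalIntegral_max_neg hV).const_mul (1 / (2 * Real.pi))).const_sub 1
  obtain ⟨c, hc⟩ := (hmean.eventually_const_lt hN).exists
  have hU : IntervalIntegrable (fun s => max (V s) (-c)) volume 0 (2 * Real.pi) :=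
    ⟨hV.1.sup (integrable_const _), hV.2.sup (integrable_const _)⟩
  obtain ⟨m, W, hW, hneg⟩ := exists_le_finrank_forall_diracForm_neg
    (star_fourierCoeffOn_ofReal Real.two_pi_pos fun s => max (V s) (-c)) c.cast_nonneg
    (fun m x => mul_norm_sq_le_diracForm x hU fun s => le_max_right _ _)
    (hc.trans_eq (by simp [re_fourierCoeffOn_ofReal_zero]))
  exact ⟨m, W, hW, fun x hx hx0 =>
    (diracForm_mono x hV hU fun s => le_max_left _ _).trans_lt (hneg x hx hx0)⟩

theorem stmt_17_general (V : ℝ → ℝ) (hV : IntervalIntegrable V volume 0 (2 * Real.pi)) :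
    ∃ M : Submodule ℂ (ℝ → ℂ),
      Module.finrank ℂ M = ⌈-((1 / (2 * Real.pi)) * ∫ s in (0 : ℝ)..(2 * Real.pi), V s)⌉₊ ∧
      (∀ f ∈ M, ∃ (K : ℕ) (a : ℕ → ℂ), ∀ s : ℝ,
        f s = ∑ n ∈ Finset.range (K + 1),
          a n * Complex.exp (Complex.I * (n : ℂ) * (s : ℂ))) ∧
      (∀ f ∈ M, f ≠ (0 : ℝ → ℂ) →
        (∫ s in (0 : ℝ)..(2 * Real.pi),
          ((-Complex.I * deriv f s + (V s : ℂ) * f s) * (starRingEnd ℂ) (f s))).re < 0) := by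
  set Φ := (1 / (2 * Real.pi)) * ∫ s in (0 : ℝ)..(2 * Real.pi), V s
  rcases le_or_gt 0 Φ with hnonneg | hneg
  · refine ⟨⊥, ?_, ?_, ?_⟩
    · rw [finrank_bot, Nat.ceil_eq_zero.2 (neg_nonpos.2 hnonneg)]
    · rintro f rfl
      exact ⟨0, 0, by simp⟩
    · exact fun f hf hf0 => absurd hf hf0
  have hN : (⌈-Φ⌉₊ : ℝ) < 1 - Φ := by linarith [Nat.ceil_lt_add_one (neg_pos.2 hneg).le]
  obtain ⟨m, W₀, hW₀, hform⟩ := exists_le_finrank_forall_diracForm_fourierCoeffOn_neg hV hN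
  obtain ⟨W, hW, hrank⟩ := exists_submodule_le_finrank_eq W₀ hW₀
  refine ⟨W.map (analyticTrigPoly m), ?_, ?_, ?_⟩
  · rw [finrank_map_of_injective (injective_analyticTrigPoly m), hrank]
  · rintro _ ⟨x, -, rfl⟩
    exact exists_analyticTrigPoly_eq_sum_range x
  · rintro _ ⟨x, hx, rfl⟩ hx0
    rw [integral_dirac_analyticTrigPoly_mul_conj x hV, ← Complex.ofReal_ofNat,
      ← Complex.ofReal_mul, Complex.re_ofReal_mul]
    exact mul_neg_of_pos_of_neg Real.two_pi_pos (hform x (hW hx) (ne_zero_of_map hx0))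

/-- Variational lower bound for the Hardy-space compression of the twisted Dirac
operator on the circle: if `Φ_V < 0`, there is a subspace of analytic trigonometric
polynomials of dimension `⌈-Φ_V⌉` on which the quadratic form of `-i d/ds + V`
is negative definite. -/
theorem stmt_17 (V : ℝ → ℝ) (hVc : Continuous V)
    (hVper : ∀ s, V (s + 2 * Real.pi) = V s)
    (hΦ : (1 / (2 * Real.pi)) * ∫ s in (0:ℝ)..(2 * Real.pi), V s < 0) :
    ∃ M : Submodule ℂ (ℝ → ℂ),
      (Module.finrank ℂ M : ℤ)
        = ⌈-((1 / (2 * Real.pi)) * ∫ s in (0:ℝ)..(2 * Real.pi), V s)⌉ ∧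
      (∀ f ∈ M, ∃ (K : ℕ) (a : ℕ → ℂ), ∀ s : ℝ,
        f s = ∑ n ∈ Finset.range (K + 1),
          a n * Complex.exp (Complex.I * (n : ℂ) * (s : ℂ))) ∧
      (∀ f ∈ M, f ≠ (0 : ℝ → ℂ) →
        (∫ s in (0:ℝ)..(2 * Real.pi),
          ((-Complex.I * deriv f s + (V s : ℂ) * f s) * (starRingEnd ℂ) (f s))).re < 0) := by
  rw [← Int.natCast_ceil_eq_ceil (neg_pos.2 hΦ).le]
  exact_mod_cast stmt_17_general V (hVc.intervalIntegrable _ _)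
end
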